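/- arXiv:2504.17284 — 4 statements merged into one kernel-verified Lean document; each statement's English description precedes it below -/
import Mathlib

section
/- For Re(x) > 0, the series ∑_{n≥1} (ψ(nx) - log(nx) + 1/(2nx)) equals the negative of the integral ∫₀^∞ (1/(e^t - 1) - 1/t + 1/2) · 1/(e^{xt} - 1) dt, where ψ is the digamma function. -/
open MeasureTheory Set

noncomputable def digammaC (x : ℂ) : ℂ := deriv Complex.Gamma x / Complex.Gamma x

/-- `𝓢₁(x) = ∑ (ψ(nx) - log(nx) + 1/(2nx))`. -/
noncomputable def S1 (x : ℂ) : ℂ :=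
  ∑' n : ℕ, (digammaC ((n + 1) * x) - Complex.log ((n + 1) * x) + 1 / (2 * (n + 1) * x))

/-- The Ramanujan period function `𝓕₁`. -/
noncomputable def F1 (x : ℂ) : ℂ :=
  S1 x - (1 / 2) * ((Real.eulerMascheroniConstant : ℂ) - Complex.log (2 * Real.pi / x))

/-!
Binet's formula exhibits the summand `ψ(z) - log z + 1/(2z)` as minus the Laplace transform at `z`
of the kernel `1/(e^t - 1) - 1/t + 1/2`. Putting `z = (n + 1)x` and summing the geometric series
`∑ e^{-(n+1)xt} = 1/(e^{xt} - 1)` under the integral sign gives the theorem; the interchange is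
legitimate because the kernel is `O(t)` at `0` and so absorbs the pole of `1/(e^{xt} - 1)`.

To prove Binet's formula on the positive reals, note that both sides satisfy the same recurrence
under `x ↦ x + 1` (for the integral this is Frullani's formula) and tend to `0` at infinity (for
the digamma side by log-convexity of `Γ`). Their difference is therefore a `1`-periodic function
tending to `0`, that is, zero. The identity theorem carries the formula to `Re z > 0`.
-/

open Filter Topology

section LaplaceTransform

variable {E : Type*} [NormedAddCommGroup E] [NormedSpace ℂ E] {f : ℝ → E} {a z : ℂ} {C : ℝ}

/-- The Laplace transform `z ↦ ∫₀^∞ e^{-zt} f(t) dt`, with the junk value `0` where the integral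
does not converge absolutely. -/
noncomputable def laplaceTransform (f : ℝ → E) (z : ℂ) : E :=
  ∫ t in Ioi (0 : ℝ), Complex.exp (-z * t) • f t

/-- Absolute convergence at `z` of the integral defining the Laplace transform of `f`. -/
def LaplaceConvergent (f : ℝ → E) (z : ℂ) : Prop :=
  IntegrableOn (fun t : ℝ => Complex.exp (-z * t) • f t) (Ioi 0)

lemma norm_cexp_neg_mul_ofReal (z : ℂ) (t : ℝ) :
    ‖Complex.exp (-z * t)‖ = Real.exp (-z.re * t) := by
  simp [Complex.norm_exp]

lemma LaplaceConvergent.mono (hf : LaplaceConvergent f a) (h : a.re ≤ z.re) :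
    LaplaceConvergent f z := by
  have hfactor : ∀ t : ℝ, Complex.exp (-z * t) • f t =
      Complex.exp (-(z - a) * t) • Complex.exp (-a * t) • f t := fun t => by
    rw [smul_smul, ← Complex.exp_add]
    ring_nf
  simp only [LaplaceConvergent, hfactor]
  refine Integrable.bdd_smul hf 1 (Continuous.aestronglyMeasurable (by fun_prop)) ?_
  filter_upwards [ae_restrict_mem measurableSet_Ioi] with t (ht : 0 < t)
  rw [norm_cexp_neg_mul_ofReal, Complex.sub_re, Real.exp_le_one_iff]
  nlinarith

lemma LaplaceConvergent.of_norm_le (hf : AEStronglyMeasurable f (volume.restrict (Ioi 0)))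
    (hC : ∀ t ∈ Ioi 0, ‖f t‖ ≤ C) (hz : 0 < z.re) : LaplaceConvergent f z :=
  (integrableOn_exp_mul_complex_Ioi (a := -z) (by simpa using hz) 0).smul_bdd C hf
    ((ae_restrict_mem measurableSet_Ioi).mono hC)

lemma norm_laplaceTransform_le (hC : ∀ t ∈ Ioi 0, ‖f t‖ ≤ C) (hz : 0 < z.re) :
    ‖laplaceTransform f z‖ ≤ C / z.re := by
  have hneg : -z.re < 0 := neg_lt_zero.2 hz
  calc ‖laplaceTransform f z‖ ≤ ∫ t in Ioi (0 : ℝ), Real.exp (-z.re * t) * C := by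
        refine norm_integral_le_of_norm_le ((integrableOn_exp_mul_Ioi hneg 0).mul_const C) ?_
        filter_upwards [ae_restrict_mem measurableSet_Ioi] with t ht
        rw [norm_smul, norm_cexp_neg_mul_ofReal]
        exact mul_le_mul_of_nonneg_left (hC t ht) (Real.exp_pos _).le
    _ = C / z.re := by
        rw [integral_mul_const, integral_exp_mul_Ioi hneg]
        simp [div_eq_inv_mul]

lemma tendsto_laplaceTransform_atTop (hC : ∀ t ∈ Ioi 0, ‖f t‖ ≤ C) :
    Tendsto (fun s : ℝ => laplaceTransform f s) atTop (𝓝 0) := by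
  refine squeeze_zero_norm' ?_ (tendsto_const_nhds.div_atTop tendsto_id : Tendsto (C / ·) atTop _)
  filter_upwards [eventually_gt_atTop 0] with s hs
  exact norm_laplaceTransform_le hC hs

lemma laplaceTransform_one (hz : 0 < z.re) : laplaceTransform (fun _ => (1 : ℂ)) z = 1 / z := by
  simp only [laplaceTransform, smul_eq_mul, mul_one]
  rw [integral_exp_mul_complex_Ioi (by simpa using hz)]
  simp

lemma mul_exp_neg_mul_le {δ : ℝ} (hδ : 0 < δ) (t : ℝ) :
    t * Real.exp (-δ * t) ≤ Real.exp (-1) / δ := by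
  rw [le_div_iff₀' hδ, ← mul_assoc, neg_mul]
  exact Real.mul_exp_neg_le_exp_neg_one (δ * t)

lemma norm_cexp_neg_mul_mul_smul_le {b t : ℝ} (ht : 0 ≤ t) (hab : a.re < b) (hbz : b ≤ z.re)
    (v : E) : ‖(Complex.exp (-z * t) * -t) • v‖ ≤
      Real.exp (-1) / (b - a.re) * ‖Complex.exp (-a * t) • v‖ := by
  rw [norm_smul, norm_smul, norm_mul, norm_cexp_neg_mul_ofReal, norm_cexp_neg_mul_ofReal,
    norm_neg, Complex.norm_of_nonneg ht, ← mul_assoc]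
  refine mul_le_mul_of_nonneg_right ?_ (norm_nonneg _)
  calc Real.exp (-z.re * t) * t
      ≤ Real.exp (-b * t) * t := by gcongr
    _ = t * Real.exp (-(b - a.re) * t) * Real.exp (-a.re * t) := by
      rw [mul_assoc, ← Real.exp_add]
      ring_nf
    _ ≤ Real.exp (-1) / (b - a.re) * Real.exp (-a.re * t) := by
      gcongr
      exact mul_exp_neg_mul_le (sub_pos.2 hab) t

theorem LaplaceConvergent.differentiableAt (hf : LaplaceConvergent f a) (h : a.re < z.re) :
    DifferentiableAt ℂ (laplaceTransform f) z := by
  obtain ⟨b, hab, hbz⟩ := exists_between h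
  have hderiv : ∀ (t : ℝ) (w : ℂ), HasDerivAt (fun w : ℂ => Complex.exp (-w * t) • f t)
      ((Complex.exp (-w * t) * -t) • f t) w := fun t w => by
    have hlin : HasDerivAt (fun w : ℂ => -w * (t : ℂ)) (-t) w := by
      simpa using (hasDerivAt_id w).neg.mul_const (t : ℂ)
    exact hlin.cexp.smul_const (f t)
  have hmeas : ∀ w : ℂ, a.re ≤ w.re → AEStronglyMeasurable
      (fun t : ℝ => Complex.exp (-w * t) • f t) (volume.restrict (Ioi 0)) :=
    fun w hw => (hf.mono hw).aestronglyMeasurable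
  have hhalf : {w : ℂ | b < w.re} ∈ 𝓝 z :=
    (isOpen_lt continuous_const Complex.continuous_re).mem_nhds hbz
  refine (hasDerivAt_integral_of_dominated_loc_of_deriv_le
    (F := fun (w : ℂ) (t : ℝ) => Complex.exp (-w * t) • f t)
    (F' := fun (w : ℂ) (t : ℝ) => (Complex.exp (-w * t) * -t) • f t) hhalf ?_ (hf.mono h.le) ?_ ?_
    (hf.norm.const_mul (Real.exp (-1) / (b - a.re)))
    (ae_of_all _ fun t w _ => hderiv t w)).2.differentiableAt
  · exact mem_of_superset hhalf fun w hw => hmeas w (hab.trans hw).le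
  · refine (AEStronglyMeasurable.smul (f := fun t : ℝ => (-t : ℂ)) (by fun_prop)
      (hmeas z h.le)).congr (ae_of_all _ fun t => ?_)
    simp only [Pi.smul_apply', smul_smul, mul_comm]
  · filter_upwards [ae_restrict_mem measurableSet_Ioi] with t ht w hw using
      norm_cexp_neg_mul_mul_smul_le (le_of_lt ht) hab (le_of_lt hw) (f t)

lemma hasSum_cexp_neg_natCast_add_one_mul (hz : 0 < z.re) :
    HasSum (fun n : ℕ => Complex.exp (-((n + 1) * z))) (Complex.exp z - 1)⁻¹ := by
  have hlt : ‖Complex.exp (-z)‖ < 1 := by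
    rw [Complex.norm_exp, Real.exp_lt_one_iff, Complex.neg_re]
    exact neg_lt_zero.2 hz
  have hgeom := (hasSum_geometric_of_norm_lt_one hlt).mul_left (Complex.exp (-z))
  convert! hgeom using 1
  · ext n
    rw [← Complex.exp_nat_mul, ← Complex.exp_add]
    ring_nf
  · rw [← inv_inv (Complex.exp (-z)), ← mul_inv, ← Complex.exp_neg, neg_neg, mul_sub,
      mul_inv_cancel₀ (Complex.exp_ne_zero z), mul_one]

lemma hasSum_exp_neg_natCast_add_one_mul {s : ℝ} (hs : 0 < s) :
    HasSum (fun n : ℕ => Real.exp (-((n + 1) * s))) (Real.exp s - 1)⁻¹ := by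
  rw [← Complex.hasSum_ofReal]
  push_cast
  exact hasSum_cexp_neg_natCast_add_one_mul (by simpa using hs)

theorem hasSum_laplaceTransform_natCast_add_one_mul (hz : 0 < z.re)
    (hf : IntegrableOn (fun t : ℝ => (Real.exp (z.re * t) - 1)⁻¹ • f t) (Ioi 0)) :
    HasSum (fun n : ℕ => laplaceTransform f ((n + 1) * z))
      (∫ t in Ioi (0 : ℝ), (Complex.exp (z * t) - 1)⁻¹ • f t) := by
  have hbound_sum : ∀ t ∈ Ioi (0 : ℝ), HasSum
      (fun n : ℕ => Real.exp (-((n + 1) * (z.re * t))) * ‖f t‖)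
      ‖(Real.exp (z.re * t) - 1)⁻¹ • f t‖ := fun t ht => by
    have hzt : 0 < z.re * t := mul_pos hz ht
    have hnonneg : 0 ≤ (Real.exp (z.re * t) - 1)⁻¹ :=
      inv_nonneg.2 (sub_nonneg.2 (Real.one_le_exp hzt.le))
    rw [norm_smul, Real.norm_of_nonneg hnonneg]
    exact (hasSum_exp_neg_natCast_add_one_mul hzt).mul_right ‖f t‖
  have hmeas : AEStronglyMeasurable f (volume.restrict (Ioi 0)) := by
    refine (AEStronglyMeasurable.smul (f := fun t : ℝ => Real.exp (z.re * t) - 1)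
      (by fun_prop) hf.aestronglyMeasurable).congr ?_
    filter_upwards [ae_restrict_mem measurableSet_Ioi] with t ht
    exact smul_inv_smul₀ (sub_pos.2 (Real.one_lt_exp_iff.2 (mul_pos hz ht))).ne' (f t)
  refine hasSum_integral_of_dominated_convergence
    (fun n t => Real.exp (-((n + 1) * (z.re * t))) * ‖f t‖)
    (fun n => AEStronglyMeasurable.smul (by fun_prop) hmeas)
    (fun n => ae_of_all _ fun t => ?_) ?_ ?_ ?_
  · rw [norm_smul, norm_cexp_neg_mul_ofReal]
    simp [mul_assoc]
  · filter_upwards [ae_restrict_mem measurableSet_Ioi] with t ht using (hbound_sum t ht).summable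
  · refine hf.norm.congr ?_
    filter_upwards [ae_restrict_mem measurableSet_Ioi] with t ht
    exact (hbound_sum t ht).tsum_eq.symm
  · filter_upwards [ae_restrict_mem measurableSet_Ioi] with t ht
    have hzt : 0 < (z * t).re := by simpa using mul_pos hz ht
    simpa only [neg_mul, mul_assoc] using
      (hasSum_cexp_neg_natCast_add_one_mul hzt).smul_const (f t)

end LaplaceTransform

section Digamma

lemma digammaC_eq_digamma : digammaC = Complex.digamma := rfl

lemma ne_neg_natCast_of_re_pos {z : ℂ} (hz : 0 < z.re) (m : ℕ) : z ≠ -m := by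
  rintro rfl
  simp only [Complex.neg_re, Complex.natCast_re, Left.neg_pos_iff] at hz
  exact hz.not_ge m.cast_nonneg

lemma differentiableAt_digamma {s : ℂ} (hs : ∀ m : ℕ, s ≠ -m) :
    DifferentiableAt ℂ Complex.digamma s := by
  have hGamma : AnalyticAt ℂ Complex.Gamma s := by
    simpa only [Pi.inv_def, inv_inv] using
      (Complex.differentiable_one_div_Gamma.analyticAt s).inv
        (inv_ne_zero (Complex.Gamma_ne_zero hs))
  exact (hGamma.deriv.div hGamma (Complex.Gamma_ne_zero hs)).differentiableAt

lemma digamma_ofReal {x : ℝ} (hx : ∀ m : ℕ, x ≠ -m) :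
    Complex.digamma x = (logDeriv Real.Gamma x : ℝ) := by
  have hderiv : deriv Complex.Gamma x = (deriv Real.Gamma x : ℝ) := by
    have hcomplex :=
      (Complex.differentiableAt_Gamma x (by exact_mod_cast hx)).hasDerivAt.comp_ofReal
    simp only [Complex.Gamma_ofReal] at hcomplex
    exact hcomplex.unique (Real.differentiableAt_Gamma hx).hasDerivAt.ofReal_comp
  rw [Complex.digamma_def, logDeriv_apply, logDeriv_apply, hderiv, Complex.Gamma_ofReal,
    Complex.ofReal_div]

variable {x : ℝ}

lemma ne_neg_natCast_of_pos (hx : 0 < x) (m : ℕ) : x ≠ -m :=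
  ((neg_nonpos.2 m.cast_nonneg).trans_lt hx).ne'

lemma differentiableAt_log_comp_Gamma (hx : 0 < x) :
    DifferentiableAt ℝ (Real.log ∘ Real.Gamma) x :=
  (Real.differentiableAt_Gamma (ne_neg_natCast_of_pos hx)).log (Real.Gamma_pos_of_pos hx).ne'

lemma deriv_log_comp_Gamma (hx : 0 < x) :
    deriv (Real.log ∘ Real.Gamma) x = logDeriv Real.Gamma x :=
  Real.deriv_log_comp_eq_logDeriv (Real.differentiableAt_Gamma (ne_neg_natCast_of_pos hx))
    (Real.Gamma_pos_of_pos hx).ne'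

lemma slope_log_comp_Gamma_add_one (hx : 0 < x) :
    slope (Real.log ∘ Real.Gamma) x (x + 1) = Real.log x := by
  rw [slope_def_field, Function.comp_apply, Function.comp_apply, Real.Gamma_add_one hx.ne',
    Real.log_mul hx.ne' (Real.Gamma_pos_of_pos hx).ne', add_sub_cancel_right, add_sub_cancel_left,
    div_one]

lemma logDeriv_Gamma_le_log (hx : 0 < x) : logDeriv Real.Gamma x ≤ Real.log x := by
  rw [← deriv_log_comp_Gamma hx, ← slope_log_comp_Gamma_add_one hx]
  exact Real.convexOn_log_Gamma.deriv_le_slope hx (add_pos hx one_pos) (lt_add_one x)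
    (differentiableAt_log_comp_Gamma hx)

lemma log_le_logDeriv_Gamma_add_one (hx : 0 < x) : Real.log x ≤ logDeriv Real.Gamma (x + 1) := by
  have hx1 : 0 < x + 1 := add_pos hx one_pos
  rw [← deriv_log_comp_Gamma hx1, ← slope_log_comp_Gamma_add_one hx]
  exact Real.convexOn_log_Gamma.slope_le_deriv hx hx1 (lt_add_one x)
    (differentiableAt_log_comp_Gamma hx1)

lemma tendsto_logDeriv_Gamma_sub_log_atTop :
    Tendsto (fun x => logDeriv Real.Gamma x - Real.log x) atTop (𝓝 0) := by
  refine tendsto_of_tendsto_of_tendsto_of_le_of_le' (Real.tendsto_log_comp_add_sub_log (-1))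
    tendsto_const_nhds ?_ ?_
  · filter_upwards [eventually_gt_atTop 1] with x hx
    simpa [← sub_eq_add_neg] using log_le_logDeriv_Gamma_add_one (sub_pos.2 hx)
  · filter_upwards [eventually_gt_atTop 0] with x hx
    exact sub_nonpos.2 (logDeriv_Gamma_le_log hx)

end Digamma

section ExponentialIntegrals

lemma mul_exp_half_le_exp_sub_one {u : ℝ} (hu : 0 ≤ u) :
    u * Real.exp (u / 2) ≤ Real.exp u - 1 := by
  have hsinh : u / 2 ≤ Real.sinh (u / 2) := Real.self_le_sinh_iff.2 (by positivity)
  calc u * Real.exp (u / 2) ≤ 2 * Real.sinh (u / 2) * Real.exp (u / 2) := by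
        gcongr
        linarith
    _ = Real.exp u - 1 := by
        rw [Real.sinh_eq, mul_div_cancel₀ _ two_ne_zero, sub_mul, ← Real.exp_add, ← Real.exp_add,
          add_halves, neg_add_cancel, Real.exp_zero]

lemma integrableOn_inv_exp_sub_one_smul {E : Type*} [NormedAddCommGroup E] [NormedSpace ℝ E]
    {f : ℝ → E} {C s : ℝ} (hf : AEStronglyMeasurable f (volume.restrict (Ioi 0)))
    (hC : ∀ t ∈ Ioi 0, ‖f t‖ ≤ C * t) (hs : 0 < s) :
    IntegrableOn (fun t : ℝ => (Real.exp (s * t) - 1)⁻¹ • f t) (Ioi 0) := by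
  have hdom : IntegrableOn (fun t : ℝ => C / s * Real.exp (-(s / 2) * t)) (Ioi 0) :=
    (integrableOn_exp_mul_Ioi (by linarith) 0).const_mul _
  refine hdom.mono' (AEStronglyMeasurable.smul (by fun_prop) hf) ?_
  filter_upwards [ae_restrict_mem measurableSet_Ioi] with t ht
  have hst : 0 < s * t := mul_pos hs ht
  have hpos : 0 < Real.exp (s * t) - 1 := sub_pos.2 (Real.one_lt_exp_iff.2 hst)
  have : 0 ≤ C * t := (norm_nonneg _).trans (hC t ht)
  rw [norm_smul, Real.norm_of_nonneg (inv_pos.2 hpos).le]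
  calc (Real.exp (s * t) - 1)⁻¹ * ‖f t‖
      ≤ (s * t * Real.exp (s * t / 2))⁻¹ * (C * t) := by
        gcongr
        · exact mul_exp_half_le_exp_sub_one hst.le
        · exact hC t ht
    _ = C / s * Real.exp (-(s / 2) * t) := by
        have ht0 : t ≠ 0 := ne_of_gt ht
        rw [show -(s / 2) * t = -(s * t / 2) by ring, Real.exp_neg]
        field_simp

lemma integrableOn_inv_mul_exp_neg_sub_exp_neg {a b : ℝ} (ha : 0 < a) (hb : 0 < b) :
    IntegrableOn (fun t : ℝ => t⁻¹ * (Real.exp (-(a * t)) - Real.exp (-(b * t)))) (Ioi 0) := by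
  wlog hab : a ≤ b generalizing a b
  · refine (this hb ha (le_of_not_ge hab)).neg.congr (ae_of_all _ fun t => ?_)
    simp only [Pi.neg_apply, ← mul_neg, neg_sub]
  refine ((integrableOn_exp_mul_Ioi (neg_lt_zero.2 ha) 0).const_mul (b - a)).mono'
    (Measurable.aestronglyMeasurable (by fun_prop)) ?_
  filter_upwards [ae_restrict_mem measurableSet_Ioi] with t (ht : 0 < t)
  have hfactor : Real.exp (-(a * t)) - Real.exp (-(b * t)) =
      Real.exp (-a * t) * (1 - Real.exp (-((b - a) * t))) := by
    rw [mul_sub, mul_one, ← Real.exp_add]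
    ring_nf
  have hle : 1 - Real.exp (-((b - a) * t)) ≤ (b - a) * t := by
    linarith [Real.one_sub_le_exp_neg ((b - a) * t)]
  have hnonneg : 0 ≤ 1 - Real.exp (-((b - a) * t)) :=
    sub_nonneg.2 (Real.exp_le_one_iff.2 (neg_nonpos.2 (mul_nonneg (sub_nonneg.2 hab) ht.le)))
  rw [hfactor, Real.norm_of_nonneg (by positivity)]
  calc t⁻¹ * (Real.exp (-a * t) * (1 - Real.exp (-((b - a) * t))))
      ≤ t⁻¹ * (Real.exp (-a * t) * ((b - a) * t)) := by gcongr
    _ = (b - a) * Real.exp (-a * t) := by field_simp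

lemma integral_inv_mul_exp_neg_sub_exp_neg {a b : ℝ} (ha : 0 < a) (hb : 0 < b) :
    ∫ t in Ioi (0 : ℝ), t⁻¹ * (Real.exp (-(a * t)) - Real.exp (-(b * t))) =
      Real.log (b / a) := by
  have hcont : Continuous fun u : ℝ => Real.exp (-u) := by fun_prop
  have hzero : Tendsto (fun u : ℝ => Real.exp (-u)) (𝓝[>] 0) (𝓝 1) := by
    simpa using (hcont.tendsto 0).mono_left nhdsWithin_le_nhds
  simpa using Frullani.integral_Ioi_eq (hcont.locallyIntegrable.locallyIntegrableOn _) ha hb hzero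
    Real.tendsto_exp_neg_atTop_nhds_zero (integrableOn_inv_mul_exp_neg_sub_exp_neg ha hb)

end ExponentialIntegrals

section BinetKernel

/-- The kernel `1/(e^t - 1) - 1/t + 1/2` of Binet's formula, meaningful for `t ≠ 0`. -/
noncomputable def binetKernel (t : ℝ) : ℝ := 1 / (Real.exp t - 1) - 1 / t + 1 / 2

variable {t : ℝ}

lemma ofReal_binetKernel (t : ℝ) :
    (binetKernel t : ℂ) = 1 / (Complex.exp t - 1) - 1 / (t : ℂ) + 1 / 2 := by
  simp [binetKernel]

lemma measurable_binetKernel : Measurable binetKernel := by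
  unfold binetKernel
  fun_prop

lemma binetKernel_nonneg (ht : 0 < t) : 0 ≤ binetKernel t := by
  have hexp : 0 < Real.exp t - 1 := sub_pos.2 (Real.one_lt_exp_iff.2 ht)
  -- At `1 + u = e^t` this reads `2 (e^t - 1) / (e^t + 1) ≤ t`.
  have hlog := Real.le_log_one_add_of_nonneg hexp.le
  rw [add_sub_cancel, Real.log_exp, div_le_iff₀ (by positivity)] at hlog
  have hkernel : binetKernel t =
      (t * (Real.exp t - 1 + 2) - 2 * (Real.exp t - 1)) / (2 * t * (Real.exp t - 1)) := by
    rw [binetKernel]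
    field_simp
    ring
  rw [hkernel]
  exact div_nonneg (sub_nonneg.2 hlog) (by positivity)

lemma binetKernel_le (ht : 0 < t) : binetKernel t ≤ t / (2 * (t + 2)) := by
  have hquad : t + t ^ 2 / 2 ≤ Real.exp t - 1 := by
    linarith [Real.quadratic_le_exp_of_nonneg ht.le]
  calc binetKernel t ≤ 1 / (t + t ^ 2 / 2) - 1 / t + 1 / 2 := by
        unfold binetKernel
        gcongr
    _ = t / (2 * (t + 2)) := by
        field_simp
        ring

lemma norm_ofReal_binetKernel_le_half (ht : 0 < t) : ‖(binetKernel t : ℂ)‖ ≤ 1 / 2 := by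
  rw [Complex.norm_of_nonneg (binetKernel_nonneg ht)]
  refine (binetKernel_le ht).trans ?_
  rw [div_le_div_iff₀ (by positivity) two_pos]
  linarith

lemma norm_ofReal_binetKernel_le_self (ht : 0 < t) : ‖(binetKernel t : ℂ)‖ ≤ t := by
  rw [Complex.norm_of_nonneg (binetKernel_nonneg ht)]
  exact (binetKernel_le ht).trans (div_le_self ht.le (by linarith))

lemma laplaceConvergent_binetKernel {z : ℂ} (hz : 0 < z.re) :
    LaplaceConvergent (fun t => (binetKernel t : ℂ)) z :=
  .of_norm_le (Complex.measurable_ofReal.comp measurable_binetKernel).aestronglyMeasurable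
    (fun _ => norm_ofReal_binetKernel_le_half) hz

end BinetKernel

section BinetFormula

lemma eq_of_add_one_eq_of_tendsto_atTop {X : Type*} [TopologicalSpace X] [T2Space X] {f : ℝ → X}
    {l : X} (hf : ∀ x, 0 < x → f (x + 1) = f x) (hl : Tendsto f atTop (𝓝 l)) {x : ℝ}
    (hx : 0 < x) : f x = l := by
  have hshift : ∀ n : ℕ, f (x + n) = f x := fun n => by
    induction n with
    | zero => simp
    | succ n ih => rw [Nat.cast_succ, ← add_assoc, hf _ (by positivity), ih]
  have hlim : Tendsto (fun n : ℕ => f (x + n)) atTop (𝓝 l) :=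
    hl.comp (tendsto_atTop_add_const_left _ _ tendsto_natCast_atTop_atTop)
  simp only [hshift] at hlim
  exact tendsto_nhds_unique tendsto_const_nhds hlim

lemma eqOn_re_pos_of_eq_ofReal {E : Type*} [NormedAddCommGroup E] [NormedSpace ℂ E]
    [CompleteSpace E] {f g : ℂ → E} (hf : DifferentiableOn ℂ f {z | 0 < z.re})
    (hg : DifferentiableOn ℂ g {z | 0 < z.re}) (h : ∀ x : ℝ, 0 < x → f x = g x) :
    EqOn f g {z | 0 < z.re} := by
  have hopen : IsOpen {z : ℂ | 0 < z.re} := isOpen_lt continuous_const Complex.continuous_re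
  refine (hf.analyticOnNhd hopen).eqOn_of_preconnected_of_frequently_eq (hg.analyticOnNhd hopen)
    (convex_halfSpace_re_gt 0).isPreconnected (z₀ := ((1 : ℝ) : ℂ))
    (show 0 < ((1 : ℝ) : ℂ).re from one_pos) ?_
  have hpunctured : Tendsto ((↑) : ℝ → ℂ) (𝓝[≠] 1) (𝓝[≠] ((1 : ℝ) : ℂ)) :=
    Complex.continuous_ofReal.continuousAt.continuousWithinAt.tendsto_nhdsWithin
      fun x hx => Complex.ofReal_injective.ne hx
  refine hpunctured.frequently (Eventually.frequently ?_)
  filter_upwards [nhdsWithin_le_nhds (eventually_gt_nhds one_pos)] with x hx using h x hx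

lemma cexp_neg_mul_smul_binetKernel_sub {t : ℝ} (ht : t ≠ 0) (s : ℝ) :
    Complex.exp (-s * t) • (binetKernel t : ℂ) -
        Complex.exp (-(s + 1) * t) • (binetKernel t : ℂ) =
      1 / 2 * (Complex.exp (-s * t) + Complex.exp (-(s + 1) * t)) -
        (t⁻¹ * (Real.exp (-(s * t)) - Real.exp (-((s + 1) * t))) : ℝ) := by
  have hexp : Complex.exp t - 1 ≠ 0 := by
    rw [← Complex.ofReal_exp, sub_ne_zero]
    exact_mod_cast mt (Real.exp_eq_one_iff t).1 ht
  have hsplit : Complex.exp (-s * t) = Complex.exp t * Complex.exp (-(s + 1) * t) := by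
    rw [← Complex.exp_add]
    ring_nf
  have ht_ofReal : (t : ℂ) ≠ 0 := Complex.ofReal_ne_zero.2 ht
  rw [ofReal_binetKernel, smul_eq_mul, smul_eq_mul]
  push_cast
  rw [← neg_mul, ← neg_mul, hsplit]
  field_simp
  ring

lemma laplaceTransform_binetKernel_sub_add_one {s : ℝ} (hs : 0 < s) :
    laplaceTransform (fun t => (binetKernel t : ℂ)) s -
        laplaceTransform (fun t => (binetKernel t : ℂ)) (s + 1) =
      1 / 2 * (1 / s + 1 / (s + 1)) - Real.log ((s + 1) / s) := by
  have hs1 : 0 < s + 1 := add_pos hs one_pos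
  have hre : 0 < (s : ℂ).re := hs
  have hre1 : 0 < (s + 1 : ℂ).re := by rwa [Complex.add_re, Complex.ofReal_re, Complex.one_re]
  have hexp := integrableOn_exp_mul_complex_Ioi (a := -(s : ℂ)) (neg_lt_zero.2 hre) 0
  have hexp1 := integrableOn_exp_mul_complex_Ioi (a := -(s + 1 : ℂ)) (neg_lt_zero.2 hre1) 0
  have hmean : IntegrableOn (fun t : ℝ => (1 / 2 : ℂ) * (Complex.exp (-s * t) +
      Complex.exp (-(s + 1) * t))) (Ioi 0) := (hexp.add hexp1).const_mul _
  have hfrullani : IntegrableOn (fun t : ℝ =>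
      ((t⁻¹ * (Real.exp (-(s * t)) - Real.exp (-((s + 1) * t))) : ℝ) : ℂ)) (Ioi 0) :=
    (integrableOn_inv_mul_exp_neg_sub_exp_neg hs hs1).ofReal
  calc laplaceTransform (fun t => (binetKernel t : ℂ)) s -
        laplaceTransform (fun t => (binetKernel t : ℂ)) (s + 1)
      = ∫ t in Ioi (0 : ℝ), (1 / 2 * (Complex.exp (-s * t) + Complex.exp (-(s + 1) * t)) -
          (t⁻¹ * (Real.exp (-(s * t)) - Real.exp (-((s + 1) * t))) : ℝ)) := by
        rw [laplaceTransform, laplaceTransform, ← integral_sub (laplaceConvergent_binetKernel hre)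
          (laplaceConvergent_binetKernel hre1)]
        exact setIntegral_congr_fun measurableSet_Ioi fun t ht =>
          cexp_neg_mul_smul_binetKernel_sub (ne_of_gt ht) s
    _ = 1 / 2 * (laplaceTransform (fun _ => (1 : ℂ)) s + laplaceTransform (fun _ => 1) (s + 1)) -
          Real.log ((s + 1) / s) := by
        rw [integral_sub hmean hfrullani, integral_const_mul, integral_add hexp hexp1,
          integral_complex_ofReal, integral_inv_mul_exp_neg_sub_exp_neg hs hs1]
        simp only [laplaceTransform, smul_eq_mul, mul_one]
    _ = 1 / 2 * (1 / s + 1 / (s + 1)) - Real.log ((s + 1) / s) := by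
        rw [laplaceTransform_one hre, laplaceTransform_one hre1]

theorem digamma_sub_log_add_inv_ofReal {x : ℝ} (hx : 0 < x) :
    Complex.digamma x - Real.log x + 1 / (2 * x) =
      -laplaceTransform (fun t => (binetKernel t : ℂ)) x := by
  let defect : ℝ → ℂ := fun y => Complex.digamma y - Real.log y + 1 / (2 * y) +
    laplaceTransform (fun t => (binetKernel t : ℂ)) y
  have hperiodic : ∀ y, 0 < y → defect (y + 1) = defect y := fun y hy => by
    have hdigamma := Complex.digamma_apply_add_one y
      (ne_neg_natCast_of_re_pos (by simpa using hy))
    have hlaplace := laplaceTransform_binetKernel_sub_add_one hy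
    rw [Real.log_div (add_pos hy one_pos).ne' hy.ne', Complex.ofReal_sub] at hlaplace
    simp only [defect, Complex.ofReal_add, Complex.ofReal_one, hdigamma, one_div, mul_inv]
      at hlaplace ⊢
    linear_combination -hlaplace
  have hlim : Tendsto defect atTop (𝓝 0) := by
    have hlog : Tendsto (fun y : ℝ => Complex.digamma y - Real.log y) atTop (𝓝 0) := by
      refine (tendsto_logDeriv_Gamma_sub_log_atTop.ofReal).congr' ?_
      filter_upwards [eventually_gt_atTop 0] with y hy
      rw [digamma_ofReal (ne_neg_natCast_of_pos hy), Complex.ofReal_sub]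
    have hinv : Tendsto (fun y : ℝ => 1 / (2 * (y : ℂ))) atTop (𝓝 0) := by
      have hreal : Tendsto (fun y : ℝ => 1 / (2 * y)) atTop (𝓝 0) :=
        tendsto_const_nhds.div_atTop (tendsto_id.const_mul_atTop two_pos)
      simpa using hreal.ofReal
    simpa only [add_zero] using (hlog.add hinv).add
      (tendsto_laplaceTransform_atTop fun _ => norm_ofReal_binetKernel_le_half)
  exact eq_neg_of_add_eq_zero_left (eq_of_add_one_eq_of_tendsto_atTop hperiodic hlim hx)

theorem digamma_sub_log_add_inv {z : ℂ} (hz : 0 < z.re) :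
    Complex.digamma z - Complex.log z + 1 / (2 * z) =
      -laplaceTransform (fun t => (binetKernel t : ℂ)) z := by
  refine eqOn_re_pos_of_eq_ofReal
    (f := fun z => Complex.digamma z - Complex.log z + 1 / (2 * z))
    (g := fun z => -laplaceTransform (fun t => (binetKernel t : ℂ)) z) ?_ ?_ ?_ hz
  · intro w hw
    have hlog : DifferentiableAt ℂ Complex.log w := Complex.differentiableAt_log (.inl hw)
    have hinv : DifferentiableAt ℂ (fun w : ℂ => 1 / (2 * w)) w :=
      DifferentiableAt.div (by fun_prop) (by fun_prop)
        (mul_ne_zero two_ne_zero (Complex.ne_zero_of_re_pos hw))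
    exact (((differentiableAt_digamma (ne_neg_natCast_of_re_pos hw)).sub hlog).add
      hinv).differentiableWithinAt
  · intro w hw
    obtain ⟨a, ha, haw⟩ := exists_between (show 0 < w.re from hw)
    exact ((laplaceConvergent_binetKernel (z := a) ha).differentiableAt
      haw).neg.differentiableWithinAt
  · intro x hx
    rw [← Complex.ofReal_log hx.le]
    exact digamma_sub_log_add_inv_ofReal hx

end BinetFormula

theorem ramanujan_integral_representation (x : ℂ) (hx : 0 < x.re) :
    S1 x = -∫ t in Set.Ioi (0 : ℝ),
      (1 / (Complex.exp t - 1) - 1 / (t : ℂ) + 1 / 2) * (1 / (Complex.exp (x * t) - 1)) := by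
  have hpos : ∀ n : ℕ, 0 < ((n + 1) * x).re := fun n => by
    have hn : (0 : ℝ) < n + 1 := by positivity
    simpa using mul_pos hn hx
  have hint : IntegrableOn
      (fun t : ℝ => (Real.exp (x.re * t) - 1)⁻¹ • (binetKernel t : ℂ)) (Ioi 0) :=
    integrableOn_inv_exp_sub_one_smul (C := 1)
      (Complex.measurable_ofReal.comp measurable_binetKernel).aestronglyMeasurable
      (fun t ht => by simpa using norm_ofReal_binetKernel_le_self ht) hx
  calc S1 x = ∑' n : ℕ, -laplaceTransform (fun t => (binetKernel t : ℂ)) ((n + 1) * x) := by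
        simp only [S1, digammaC_eq_digamma, mul_assoc, digamma_sub_log_add_inv (hpos _)]
    _ = -∫ t in Ioi (0 : ℝ), (Complex.exp (x * t) - 1)⁻¹ • (binetKernel t : ℂ) := by
        rw [tsum_neg, (hasSum_laplaceTransform_natCast_add_one_mul hx hint).tsum_eq]
    _ = -∫ t in Ioi (0 : ℝ),
          (1 / (Complex.exp t - 1) - 1 / (t : ℂ) + 1 / 2) * (1 / (Complex.exp (x * t) - 1)) := by
        simp only [ofReal_binetKernel, smul_eq_mul, one_div, mul_comm]
end

section
/- For x in ℂ \ (-∞, 0], the Ramanujan period function satisfies the two-term relation 𝓕₁(x) = (1/x)·𝓕₁(1/x). -/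
open MeasureTheory Set

/-!
Since `ψ (z + N) = ψ z + ∑ m < N, 1 / (z + m)`, the `N`-th partial sum of `S1 x` equals, up to a sum
of Stirling remainders that tends to `0`, minus the lattice sum `∑ 1 / (n x + m)` over
`1 ≤ n, m ≤ N` plus sums of logarithms and reciprocals, which the trapezoidal rule and Stirling's
formula evaluate up to `o(1)`. This exhibits `F1 x` as the limit of `periodApprox x N`. The lattice
sum is symmetric in `n` and `m` and homogeneous of degree `-1`, and
`log (1 + 1/x) = log (1 + x) - log x`, so every single `periodApprox x N` already satisfies the
two-term relation, which passes to the limit.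
-/

namespace RamanujanPeriod

open Filter Topology Complex
open scoped Real Nat ComplexConjugate

section Convergence

variable {E : Type*} [NormedAddCommGroup E]

lemma norm_le_of_tendsto_zero_of_norm_sub_le {v : ℕ → E} {a : ℕ → ℝ}
    (hv : Tendsto v atTop (𝓝 0)) (ha : ∀ k, 0 ≤ a k)
    (h : ∀ k, ‖v k - v (k + 1)‖ ≤ a k - a (k + 1)) : ‖v 0‖ ≤ a 0 := by
  have hmono : Monotone fun k => ‖v k‖ - a k := monotone_nat_of_le_succ fun k => by
    linarith [h k, norm_sub_norm_le (v k) (v (k + 1))]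
  have hle : ∀ k, ‖v 0‖ - a 0 ≤ ‖v k‖ := fun k => by
    linarith [hmono (Nat.zero_le k), ha k]
  have := ge_of_tendsto' hv.norm hle
  rw [norm_zero] at this
  linarith

lemma tendsto_sum_range_zero_of_norm_le {e : ℕ → ℕ → E} {C : ℝ}
    (h : ∀ N n, n < N → ‖e N n‖ ≤ C / N ^ 2) :
    Tendsto (fun N => ∑ n ∈ Finset.range N, e N n) atTop (𝓝 0) := by
  refine squeeze_zero_norm (fun N => ?_) (tendsto_const_div_atTop_nhds_zero_nat C)
  calc ‖∑ n ∈ Finset.range N, e N n‖ ≤ ∑ _n ∈ Finset.range N, C / (N : ℝ) ^ 2 :=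
        norm_sum_le_of_le _ fun _ hn => h N _ (Finset.mem_range.1 hn)
    _ = C / N := by
        rw [Finset.sum_const, Finset.card_range, nsmul_eq_mul]
        field_simp

lemma tendsto_circleIntegral_of_norm_le [NormedSpace ℂ E]
    {ι : Type*} {l : Filter ι} [l.IsCountablyGenerated] {f : ι → ℂ → E} {g : ℂ → E}
    {c : ℂ} {R M : ℝ} (hR : 0 ≤ R) (hf : ∀ᶠ i in l, ContinuousOn (f i) (Metric.sphere c R))
    (hM : ∀ᶠ i in l, ∀ z ∈ Metric.sphere c R, ‖f i z‖ ≤ M)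
    (h : ∀ z ∈ Metric.sphere c R, Tendsto (fun i => f i z) l (𝓝 (g z))) :
    Tendsto (fun i => ∮ z in C(c, R), f i z) l (𝓝 (∮ z in C(c, R), g z)) := by
  have hmem : ∀ θ, circleMap c R θ ∈ Metric.sphere c R := circleMap_mem_sphere c hR
  refine intervalIntegral.tendsto_integral_filter_of_dominated_convergence
    (fun _ => R * M) ?_ ?_ intervalIntegrable_const ?_
  · filter_upwards [hf] with i hi
    have hcont : Continuous fun θ => f i (circleMap c R θ) :=
      hi.comp_continuous (continuous_circleMap c R) hmem
    simp only [deriv_circleMap]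
    exact (((continuous_circleMap 0 R).mul_const I).smul hcont).aestronglyMeasurable
  · filter_upwards [hM] with i hi
    refine .of_forall fun θ _ => ?_
    rw [norm_smul, deriv_circleMap, norm_mul, norm_I, mul_one, norm_circleMap_zero,
      abs_of_nonneg hR]
    gcongr
    exact hi _ (hmem θ)
  · exact .of_forall fun θ _ => (h _ (hmem θ)).const_smul _

lemma tendsto_deriv_of_tendsto_of_norm_le [NormedSpace ℂ E] [CompleteSpace E]
    {ι : Type*} {l : Filter ι} [l.IsCountablyGenerated] {f : ι → ℂ → E} {g : ℂ → E}
    {c : ℂ} {R M : ℝ} (hR : 0 < R)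
    (hf : ∀ᶠ i in l, DifferentiableOn ℂ (f i) (Metric.closedBall c R))
    (hg : DifferentiableOn ℂ g (Metric.closedBall c R))
    (hM : ∀ᶠ i in l, ∀ z ∈ Metric.sphere c R, ‖f i z‖ ≤ M)
    (h : ∀ z ∈ Metric.sphere c R, Tendsto (fun i => f i z) l (𝓝 (g z))) :
    Tendsto (fun i => deriv (f i) c) l (𝓝 (deriv g c)) := by
  have hne : ∀ z ∈ Metric.sphere c R, (z - c) ^ 2 ≠ 0 := fun z hz =>
    pow_ne_zero 2 (sub_ne_zero.2 (Metric.ne_of_mem_sphere hz hR.ne'))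
  have hI : Tendsto (fun i => ∮ z in C(c, R), (1 / (z - c) ^ 2) • f i z) l
      (𝓝 (∮ z in C(c, R), (1 / (z - c) ^ 2) • g z)) := by
    refine tendsto_circleIntegral_of_norm_le (M := 1 / R ^ 2 * M) hR.le ?_ ?_
      fun z hz => (h z hz).const_smul _
    · filter_upwards [hf] with i hi
      exact (continuousOn_const.div (by fun_prop) hne).smul
        (hi.continuousOn.mono Metric.sphere_subset_closedBall)
    · filter_upwards [hM] with i hi z hz
      rw [norm_smul, norm_div, norm_one, norm_pow, mem_sphere_iff_norm.1 hz]
      gcongr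
      exact hi z hz
  have hcauchy : ∀ {k : ℂ → E}, DifferentiableOn ℂ k (Metric.closedBall c R) →
      (2 * π * I)⁻¹ • (∮ z in C(c, R), (1 / (z - c) ^ 2) • k z) = deriv k c := fun hk => by
    rw [hk.deriv_eq_smul_circleIntegral hR, inv_smul_smul₀ two_pi_I_ne_zero]
  rw [← hcauchy hg]
  exact (hI.const_smul _).congr' (hf.mono fun i hi => hcauchy hi)

end Convergence

section Trapezoid

variable {𝕜 E : Type*} [RCLike 𝕜] [NormedAddCommGroup E] [NormedSpace 𝕜 E]
  {f f' f'' f''' : 𝕜 → E} {s : Set 𝕜} {C : ℝ} {w z : 𝕜}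

lemma norm_image_sub_sub_smul_deriv_right_le (hs : Convex ℝ s)
    (hf : ∀ ζ ∈ s, HasDerivAt f (f' ζ) ζ) (hf' : ∀ ζ ∈ s, HasDerivAt f' (f'' ζ) ζ)
    (hC : ∀ ζ ∈ s, ‖f'' ζ‖ ≤ C) (hw : w ∈ s) (hz : z ∈ s) :
    ‖f z - f w - (z - w) • f' z‖ ≤ C * ‖z - w‖ ^ 2 := by
  have hsub : segment ℝ z w ⊆ s := hs.segment_subset hz hw
  have hderiv : ∀ ζ ∈ segment ℝ z w,
      HasDerivWithinAt (fun ζ => f ζ - ζ • f' z) (f' ζ - f' z) (segment ℝ z w) ζ := fun ζ hζ => by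
    simpa using ((hf ζ (hsub hζ)).fun_sub ((hasDerivAt_id' ζ).smul_const (f' z))).hasDerivWithinAt
  have hbound : ∀ ζ ∈ segment ℝ z w, ‖f' ζ - f' z‖ ≤ C * ‖w - z‖ := fun ζ hζ =>
    (hs.norm_image_sub_le_of_norm_hasDerivWithin_le (fun η hη => (hf' η hη).hasDerivWithinAt) hC hz
      (hsub hζ)).trans <| by
        have := (norm_nonneg _).trans (hC z hz)
        gcongr
        exact norm_sub_le_of_mem_segment hζ
  calc _ = ‖f z - z • f' z - (f w - w • f' z)‖ := by congr 1; module
    _ ≤ C * ‖w - z‖ * ‖z - w‖ := (convex_segment z w).norm_image_sub_le_of_norm_hasDerivWithin_le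
        hderiv hbound (right_mem_segment ℝ z w) (left_mem_segment ℝ z w)
    _ = C * ‖z - w‖ ^ 2 := by rw [norm_sub_rev w z]; ring

lemma norm_image_sub_sub_trapezoid_le (hs : Convex ℝ s)
    (hf : ∀ ζ ∈ s, HasDerivAt f (f' ζ) ζ) (hf' : ∀ ζ ∈ s, HasDerivAt f' (f'' ζ) ζ)
    (hf'' : ∀ ζ ∈ s, HasDerivAt f'' (f''' ζ) ζ)
    (hC : ∀ ζ ∈ s, ‖f''' ζ‖ ≤ C) (hw : w ∈ s) (hz : z ∈ s) :
    ‖f z - f w - ((z - w) / 2) • (f' w + f' z)‖ ≤ C / 2 * ‖z - w‖ ^ 3 := by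
  have hsub : segment ℝ w z ⊆ s := hs.segment_subset hw hz
  have hderiv : ∀ ζ ∈ segment ℝ w z,
      HasDerivWithinAt (fun ζ => f ζ - ((ζ - w) / 2) • (f' w + f' ζ))
        ((1 / 2 : 𝕜) • (f' ζ - f' w - (ζ - w) • f'' ζ)) (segment ℝ w z) ζ := fun ζ hζ => by
    refine HasDerivAt.hasDerivWithinAt (((hf ζ (hsub hζ)).fun_sub
      ((((hasDerivAt_id' ζ).sub_const w).div_const 2).fun_smul
        ((hf' ζ (hsub hζ)).const_add (f' w)))).congr_deriv ?_)
    module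
  have hbound : ∀ ζ ∈ segment ℝ w z,
      ‖(1 / 2 : 𝕜) • (f' ζ - f' w - (ζ - w) • f'' ζ)‖ ≤ C / 2 * ‖z - w‖ ^ 2 := fun ζ hζ => by
    have hC0 := (norm_nonneg _).trans (hC z hz)
    calc _ = ‖f' ζ - f' w - (ζ - w) • f'' ζ‖ / 2 := by
          rw [norm_smul, norm_div, norm_one, RCLike.norm_ofNat]; ring
      _ ≤ C * ‖ζ - w‖ ^ 2 / 2 := by
        gcongr
        exact norm_image_sub_sub_smul_deriv_right_le hs hf' hf'' hC hw (hsub hζ)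
      _ ≤ C * ‖z - w‖ ^ 2 / 2 := by
        gcongr
        exact norm_sub_le_of_mem_segment hζ
      _ = C / 2 * ‖z - w‖ ^ 2 := by ring
  calc _ = ‖f z - ((z - w) / 2) • (f' w + f' z) - (f w - ((w - w) / 2) • (f' w + f' w))‖ := by
        congr 1; module
    _ ≤ C / 2 * ‖z - w‖ ^ 2 * ‖z - w‖ :=
        (convex_segment w z).norm_image_sub_le_of_norm_hasDerivWithin_le hderiv hbound
          (left_mem_segment ℝ w z) (right_mem_segment ℝ w z)
    _ = C / 2 * ‖z - w‖ ^ 3 := by ring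

end Trapezoid

section Log

variable {s : Set ℂ} {r : ℝ} {w z : ℂ}

lemma hasDerivAt_mul_log_sub (hz : z ∈ slitPlane) :
    HasDerivAt (fun z => z * log z - z) (log z) z := by
  refine HasDerivAt.congr_deriv
    (((hasDerivAt_id' z).fun_mul (hasDerivAt_log hz)).fun_sub (hasDerivAt_id' z)) ?_
  rw [mul_inv_cancel₀ (slitPlane_ne_zero hz), one_mul, add_sub_cancel_right]

lemma norm_log_sub_log_sub_div_le (hs : Convex ℝ s) (hslit : s ⊆ slitPlane) (hr : 0 < r)
    (hnorm : ∀ ζ ∈ s, r ≤ ‖ζ‖) (hw : w ∈ s) (hz : z ∈ s) :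
    ‖log z - log w - (z - w) * z⁻¹‖ ≤ ‖z - w‖ ^ 2 / r ^ 2 := by
  refine (norm_image_sub_sub_smul_deriv_right_le (C := 1 / r ^ 2) hs
    (fun ζ hζ => hasDerivAt_log (hslit hζ))
    (fun ζ hζ => hasDerivAt_inv (slitPlane_ne_zero (hslit hζ))) (fun ζ hζ => ?_) hw hz).trans_eq
      (by ring)
  rw [norm_neg, norm_inv, norm_pow, ← one_div]
  gcongr
  exact hnorm ζ hζ

lemma norm_log_sub_log_sub_trapezoid_le (hs : Convex ℝ s) (hslit : s ⊆ slitPlane) (hr : 0 < r)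
    (hnorm : ∀ ζ ∈ s, r ≤ ‖ζ‖) (hw : w ∈ s) (hz : z ∈ s) :
    ‖log z - log w - (z - w) / 2 * (w⁻¹ + z⁻¹)‖ ≤ ‖z - w‖ ^ 3 / r ^ 3 := by
  refine (norm_image_sub_sub_trapezoid_le (C := 2 / r ^ 3) (f''' := fun ζ => 2 / ζ ^ 3) hs
    (fun ζ hζ => hasDerivAt_log (hslit hζ))
    (fun ζ hζ => hasDerivAt_inv (slitPlane_ne_zero (hslit hζ))) (fun ζ hζ => ?_) (fun ζ hζ => ?_)
    hw hz).trans_eq (by ring)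
  · have hζ0 := slitPlane_ne_zero (hslit hζ)
    refine ((hasDerivAt_pow 2 ζ).fun_inv (pow_ne_zero 2 hζ0)).fun_neg.congr_deriv ?_
    push_cast
    field_simp
  · rw [norm_div, norm_pow, Complex.norm_two]
    gcongr
    exact hnorm ζ hζ

lemma norm_mul_log_sub_trapezoid_le (hs : Convex ℝ s) (hslit : s ⊆ slitPlane) (hr : 0 < r)
    (hnorm : ∀ ζ ∈ s, r ≤ ‖ζ‖) (hw : w ∈ s) (hz : z ∈ s) :
    ‖(z * log z - z) - (w * log w - w) - (z - w) / 2 * (log w + log z)‖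
      ≤ ‖z - w‖ ^ 3 / (2 * r ^ 2) := by
  refine (norm_image_sub_sub_trapezoid_le (C := 1 / r ^ 2) (f := fun ζ => ζ * log ζ - ζ) hs
    (fun ζ hζ => hasDerivAt_mul_log_sub (hslit hζ))
    (fun ζ hζ => hasDerivAt_log (hslit hζ))
    (fun ζ hζ => hasDerivAt_inv (slitPlane_ne_zero (hslit hζ))) (fun ζ hζ => ?_) hw hz).trans_eq
      (by ring)
  rw [norm_neg, norm_inv, norm_pow, ← one_div]
  gcongr
  exact hnorm ζ hζ

end Log

section HalfPlane

/-- The half-plane `r ≤ Re (u z)`. For `0 < Re u` it contains the translates of its points by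
positive integers, and every point of the slit plane has all its positive multiples in such a
half-plane with `r` growing linearly. -/
def tiltedHalfPlane (u : ℂ) (r : ℝ) : Set ℂ := {z | r ≤ (u * z).re}

variable {u z : ℂ} {r c : ℝ}

lemma mem_tiltedHalfPlane : z ∈ tiltedHalfPlane u r ↔ r ≤ (u * z).re := Iff.rfl

lemma convex_tiltedHalfPlane (u : ℂ) (r : ℝ) : Convex ℝ (tiltedHalfPlane u r) :=
  convex_halfSpace_ge (reLm ∘ₗ LinearMap.mulLeft ℝ u).isLinear r

lemma tiltedHalfPlane_subset_slitPlane (hu : 0 ≤ u.re) (hr : 0 < r) :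
    tiltedHalfPlane u r ⊆ slitPlane := fun z hz => by
  by_contra hz'
  obtain ⟨hre, him⟩ : z.re ≤ 0 ∧ z.im = 0 := by simpa [mem_slitPlane_iff] using hz'
  have : r ≤ u.re * z.re := by simpa [mem_tiltedHalfPlane, him] using hz
  linarith [mul_nonpos_of_nonneg_of_nonpos hu hre]

lemma le_norm_of_mem_tiltedHalfPlane (hu : ‖u‖ ≤ 1) (hz : z ∈ tiltedHalfPlane u r) :
    r ≤ ‖z‖ :=
  calc r ≤ ‖u * z‖ := hz.trans (re_le_norm _)
    _ ≤ ‖z‖ := by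
      rw [norm_mul]
      exact mul_le_of_le_one_left (norm_nonneg z) hu

lemma tiltedHalfPlane_anti (u : ℂ) {r r' : ℝ} (h : r ≤ r') :
    tiltedHalfPlane u r' ⊆ tiltedHalfPlane u r :=
  fun _ hz => h.trans hz

lemma natCast_mul_mem_tiltedHalfPlane (hz : z ∈ tiltedHalfPlane u r) (k : ℕ) :
    k * z ∈ tiltedHalfPlane u (k * r) := by
  rw [mem_tiltedHalfPlane, mul_left_comm, ← ofReal_natCast, re_ofReal_mul]
  gcongr
  exact hz

lemma add_natCast_mem_tiltedHalfPlane (hu : c ≤ u.re) (hz : z ∈ tiltedHalfPlane u r) (k : ℕ) :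
    z + k ∈ tiltedHalfPlane u (r + c * k) := by
  have : (u * (z + k)).re = (u * z).re + u.re * k := by simp [mul_add]
  rw [mem_tiltedHalfPlane, this]
  exact add_le_add hz (by gcongr)

lemma mul_add_natCast_mem_tiltedHalfPlane (hc : 0 ≤ c) (hu : c ≤ u.re)
    (hz : z ∈ tiltedHalfPlane u c) (a b : ℕ) : a * z + b ∈ tiltedHalfPlane u (c * b) :=
  tiltedHalfPlane_anti u (le_add_of_nonneg_left (by positivity))
    (add_natCast_mem_tiltedHalfPlane hu (natCast_mul_mem_tiltedHalfPlane hz a) b)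

lemma exists_mem_tiltedHalfPlane {x : ℂ} (hx : x ∈ slitPlane) :
    ∃ u : ℂ, ∃ c > 0, ‖u‖ ≤ 1 ∧ c ≤ u.re ∧ x ∈ tiltedHalfPlane u c := by
  have hx0 := norm_pos_iff.2 (slitPlane_ne_zero hx)
  have hpos : 0 < ‖x‖ + x.re := by
    rcases hx with hre | him
    · positivity
    · linarith [neg_abs_le x.re, abs_re_lt_norm.2 him]
  set v : ℂ := ‖x‖ + conj x with hv
  have hv_re : v.re = ‖x‖ + x.re := by simp [hv]
  have hvx_re : (v * x).re = ‖x‖ * (‖x‖ + x.re) := by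
    rw [hv, add_mul, conj_mul', ← ofReal_pow, add_re, re_ofReal_mul, ofReal_re]
    ring
  have hv0 : 0 < ‖v‖ := norm_pos_iff.2 fun h => by simp [← hv_re, h] at hpos
  refine ⟨(‖v‖⁻¹ : ℝ) * v, min (‖v‖⁻¹ * v.re) (‖v‖⁻¹ * (v * x).re), ?_, ?_, ?_, ?_⟩
  · rw [hv_re, hvx_re]
    positivity
  · rw [norm_mul, norm_real, norm_inv, norm_norm, inv_mul_cancel₀ hv0.ne']
  · rw [re_ofReal_mul]
    exact min_le_left _ _
  · rw [mem_tiltedHalfPlane, mul_assoc, re_ofReal_mul]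
    exact min_le_right _ _

end HalfPlane

section Digamma

variable {s : ℂ} {n : ℕ}

lemma gammaSeq_le_Gamma {x : ℝ} (hx : 0 < x) (hn : n ≠ 0) :
    Real.GammaSeq x n ≤ Real.Gamma x := by
  have hfeq {y : ℝ} (hy : 0 < y) : Real.log (Real.Gamma (y + 1)) =
      Real.log (Real.Gamma y) + Real.log y := by
    rw [Real.Gamma_add_one hy.ne', Real.log_mul hy.ne' (Real.Gamma_pos_of_pos hy).ne', add_comm]
  have h := Real.BohrMollerup.ge_logGammaSeq Real.convexOn_log_Gamma hfeq hx hn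
  simp only [Function.comp_apply, Real.Gamma_one, Real.log_one, zero_add] at h
  have hprod : ∀ m ∈ Finset.range (n + 1), x + m ≠ 0 := fun m _ => by positivity
  have hlog : Real.log (Real.GammaSeq x n) = Real.BohrMollerup.logGammaSeq x n := by
    rw [Real.GammaSeq, Real.BohrMollerup.logGammaSeq,
      Real.log_div (by positivity) (Finset.prod_ne_zero_iff.2 hprod),
      Real.log_mul (by positivity) (by positivity), Real.log_rpow (by positivity),
      Real.log_prod hprod]
  have hpos : 0 < Real.GammaSeq x n := by
    rw [Real.GammaSeq]
    have := Finset.prod_pos fun m (_ : m ∈ Finset.range (n + 1)) =>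
      add_pos_of_pos_of_nonneg hx (Nat.cast_nonneg (α := ℝ) m)
    positivity
  exact (Real.log_le_log_iff hpos (Real.Gamma_pos_of_pos hx)).1 (hlog.trans_le h)

lemma norm_gammaSeq_le (hs : 0 < s.re) (hn : n ≠ 0) :
    ‖GammaSeq s n‖ ≤ Real.GammaSeq s.re n := by
  rw [GammaSeq, Real.GammaSeq, norm_div, norm_mul, norm_natCast_cpow_of_pos hn.bot_lt,
    norm_natCast, norm_prod]
  gcongr with j
  simpa using re_le_norm (s + j)

lemma add_natCast_ne_zero (hs : ∀ m : ℕ, s ≠ -m) (k : ℕ) : s + k ≠ 0 :=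
  fun h => hs k (eq_neg_of_add_eq_zero_left h)

lemma ne_neg_natCast_of_re_pos (hs : 0 < s.re) (m : ℕ) : s ≠ -m := by
  rintro rfl
  simp only [neg_re, natCast_re] at hs
  linarith [Nat.cast_nonneg (α := ℝ) m]

lemma differentiableAt_gammaSeq (hs : ∀ m : ℕ, s ≠ -m) (hn : n ≠ 0) :
    DifferentiableAt ℂ (fun s => GammaSeq s n) s := by
  have hprod := Finset.prod_ne_zero_iff.2 fun j (_ : j ∈ Finset.range (n + 1)) =>
    add_natCast_ne_zero hs j
  have hn' : (n : ℂ) ≠ 0 := Nat.cast_ne_zero.2 hn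
  unfold GammaSeq
  fun_prop (disch := first | assumption | exact .inl hn')

lemma logDeriv_gammaSeq (hs : ∀ m : ℕ, s ≠ -m) (hn : n ≠ 0) :
    logDeriv (fun s => GammaSeq s n) s =
      Real.log n - ∑ j ∈ Finset.range (n + 1), (s + j)⁻¹ := by
  have hne : ∀ j ∈ Finset.range (n + 1), s + j ≠ 0 := fun j _ => add_natCast_ne_zero hs j
  have hn' : (n : ℂ) ≠ 0 := Nat.cast_ne_zero.2 hn
  have hfac : (n ! : ℂ) ≠ 0 := Nat.cast_ne_zero.2 n.factorial_ne_zero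
  have hpow0 : (n : ℂ) ^ s ≠ 0 := by simp [cpow_eq_zero_iff, hn']
  have hpow : HasDerivAt (fun s => (n : ℂ) ^ s) ((n : ℂ) ^ s * log n) s := by
    simpa using (hasDerivAt_id s).const_cpow (.inl hn')
  have hlin : ∀ j : ℕ, logDeriv (fun s : ℂ => s + j) s = (s + j)⁻¹ := fun j => by
    simp [logDeriv_apply]
  unfold GammaSeq
  rw [logDeriv_div (f := fun s => (n : ℂ) ^ s * n !) s (mul_ne_zero hpow0 hfac)
      (Finset.prod_ne_zero_iff.2 hne) (hpow.differentiableAt.mul_const _) (by fun_prop),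
    logDeriv_mul_const s _ hfac, logDeriv_prod hne (by fun_prop), logDeriv_apply, hpow.deriv,
    mul_div_cancel_left₀ _ hpow0, natCast_log]
  simp only [hlin]

-- Euler's sequence is dominated by `Γ (re z)`, so Cauchy's formula lets its derivatives converge.
lemma tendsto_log_sub_sum_inv_digamma (hs : 0 < s.re) :
    Tendsto (fun n : ℕ => Real.log n - ∑ j ∈ Finset.range (n + 1), (s + j)⁻¹) atTop
      (𝓝 (digamma s)) := by
  have hre : ∀ z ∈ Metric.closedBall s (s.re / 2), 0 < z.re := fun z hz => by
    have := (abs_re_le_norm (z - s)).trans (mem_closedBall_iff_norm.1 hz)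
    rw [sub_re] at this
    linarith [(abs_le.1 this).1]
  have hre' : ∀ z ∈ Metric.sphere s (s.re / 2), 0 < z.re := fun z hz =>
    hre z (Metric.sphere_subset_closedBall hz)
  obtain ⟨M, hM⟩ := (isCompact_sphere s (s.re / 2)).exists_bound_of_continuousOn
    (f := fun z => Real.Gamma z.re)
      (Real.differentiableOn_Gamma_Ioi.continuousOn.comp continuous_re.continuousOn hre')
  have hderiv : Tendsto (fun n : ℕ => deriv (fun z => GammaSeq z n) s) atTop
      (𝓝 (deriv Gamma s)) := by
    refine tendsto_deriv_of_tendsto_of_norm_le (half_pos hs) ?_ (fun z hz => ?_) (M := M) ?_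
      fun z _ => GammaSeq_tendsto_Gamma z
    · filter_upwards [eventually_ne_atTop 0] with n hn z hz
      exact (differentiableAt_gammaSeq
        (ne_neg_natCast_of_re_pos (hre z hz)) hn).differentiableWithinAt
    · exact (differentiableAt_Gamma z
        (ne_neg_natCast_of_re_pos (hre z hz))).differentiableWithinAt
    · filter_upwards [eventually_ne_atTop 0] with n hn z hz
      exact (norm_gammaSeq_le (hre' z hz) hn).trans <|
        (gammaSeq_le_Gamma (hre' z hz) hn).trans ((le_abs_self _).trans (hM z hz))
  have hs' := ne_neg_natCast_of_re_pos hs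
  refine (hderiv.div (GammaSeq_tendsto_Gamma s) (Gamma_ne_zero hs')).congr' ?_
  filter_upwards [eventually_ne_atTop 0] with n hn using logDeriv_gammaSeq hs' hn

lemma digamma_add_natCast (hs : ∀ m : ℕ, s ≠ -m) (n : ℕ) :
    digamma (s + n) = digamma s + ∑ k ∈ Finset.range n, (s + k)⁻¹ := by
  induction n with
  | zero => simp
  | succ n ih =>
    have hne : ∀ m : ℕ, s + n ≠ -m := fun m h => hs (n + m) (by
      push_cast; linear_combination h)
    rw [Finset.sum_range_succ, ← add_assoc, ← ih, ← digamma_apply_add_one _ hne]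
    push_cast
    rw [add_assoc]

lemma log_natCast_mul {x : ℂ} (hn : n ≠ 0) (hx : x ≠ 0) : log (n * x) = Real.log n + log x := by
  rw [← log_ofReal_mul (Nat.cast_pos.2 hn.bot_lt) hx, ofReal_natCast]

lemma tendsto_log_add_natCast_sub_log (z : ℂ) :
    Tendsto (fun n : ℕ => log (z + n) - Real.log n) atTop (𝓝 0) := by
  have hone : Tendsto (fun n : ℕ => 1 + z / n) atTop (𝓝 1) := by
    simpa using (tendsto_const_div_atTop_nhds_zero_nat z).const_add 1
  have hlog := hone.clog one_mem_slitPlane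
  rw [log_one] at hlog
  refine hlog.congr' ?_
  filter_upwards [eventually_ne_atTop 0, hone.eventually_ne one_ne_zero] with n hn hne
  have hn' : (n : ℂ) ≠ 0 := Nat.cast_ne_zero.2 hn
  have : z + n = n * (1 + z / n) := by field_simp; ring
  rw [this, log_natCast_mul hn hne, add_sub_cancel_left]

lemma tendsto_digamma_add_natCast_sub_log (s : ℂ) :
    Tendsto (fun n : ℕ => digamma (s + n) - Real.log n) atTop (𝓝 0) := by
  obtain ⟨k, hk⟩ := exists_nat_gt (-s.re)
  have hre : 0 < (s + k).re := by
    rw [add_re, natCast_re]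
    linarith
  have hψ : Tendsto (fun n : ℕ => digamma (s + k + (n + 1 : ℕ)) - Real.log n) atTop (𝓝 0) := by
    have h := (tendsto_log_sub_sum_inv_digamma hre).const_sub (digamma (s + k))
    rw [sub_self] at h
    refine h.congr fun n => ?_
    rw [digamma_add_natCast (ne_neg_natCast_of_re_pos hre)]
    ring
  have h := hψ.sub (tendsto_log_add_natCast_sub_log (k + 1 : ℕ))
  rw [sub_zero] at h
  rw [← tendsto_add_atTop_iff_nat (k + 1)]
  refine h.congr fun n => ?_
  have harg : s + (n + (k + 1) : ℕ) = s + k + (n + 1 : ℕ) := by push_cast; ring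
  rw [sub_sub_sub_cancel_right, harg, natCast_log, Nat.cast_add n (k + 1),
    add_comm (n : ℂ) (k + 1 : ℕ)]

end Digamma

section Remainder

/-- The remainder in the two-term Stirling expansion `ψ(z) ~ log z - 1 / (2 z)` of the digamma
function. -/
noncomputable def digammaRemainder (z : ℂ) : ℂ := digamma z - log z + 1 / (2 * z)

variable {u z : ℂ} {r c : ℝ}

lemma ne_neg_natCast_of_mem_slitPlane (hz : z ∈ slitPlane) (m : ℕ) : z ≠ -m := by
  rintro rfl
  exact absurd hz (by simp [mem_slitPlane_iff, (Nat.cast_nonneg (α := ℝ) m).not_gt])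

lemma digammaRemainder_sub_add_one (hz : z ∈ slitPlane) :
    digammaRemainder z - digammaRemainder (z + 1) =
      log (z + 1) - log z - ((z + 1) - z) / 2 * (z⁻¹ + (z + 1)⁻¹) := by
  rw [digammaRemainder, digammaRemainder,
    digamma_apply_add_one z (ne_neg_natCast_of_mem_slitPlane hz), one_div, one_div, mul_inv,
    mul_inv]
  ring

lemma tendsto_digammaRemainder_add_natCast (z : ℂ) :
    Tendsto (fun n : ℕ => digammaRemainder (z + n)) atTop (𝓝 0) := by
  have hinv : Tendsto (fun n : ℕ => (z + n)⁻¹) atTop (𝓝 0) :=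
    (tendsto_inv₀_cobounded.comp (tendsto_const_add_cobounded z)).comp
      tendsto_natCast_atTop_cobounded
  have h := ((tendsto_digamma_add_natCast_sub_log z).sub (tendsto_log_add_natCast_sub_log z)).add
    (hinv.const_mul (1 / 2))
  rw [sub_zero, mul_zero, add_zero] at h
  refine h.congr fun n => ?_
  rw [sub_sub_sub_cancel_right, digammaRemainder, ← one_div, one_div_mul_one_div]

-- The majorant telescopes along `ρ, ρ + 2 * h, ρ + 4 * h, …`.
lemma one_div_cube_le {h ρ : ℝ} (h0 : 0 < h) (hρ : h < ρ) :
    1 / ρ ^ 3 ≤ 1 / (4 * h * (ρ - h) ^ 2) - 1 / (4 * h * (ρ + h) ^ 2) := by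
  have hρ0 : 0 < ρ := h0.trans hρ
  have hsub : 0 < ρ - h := sub_pos.2 hρ
  have hsq : 0 < ρ ^ 2 - h ^ 2 := by nlinarith
  calc 1 / ρ ^ 3 = ρ / (ρ ^ 2) ^ 2 := by field_simp
    _ ≤ ρ / (ρ ^ 2 - h ^ 2) ^ 2 := by
      gcongr
      exact sub_le_self _ (sq_nonneg _)
    _ = ρ / ((ρ - h) * (ρ + h)) ^ 2 := by ring
    _ = _ := by
      field_simp
      ring

lemma norm_digammaRemainder_le (hc : 0 < c) (hu : ‖u‖ ≤ 1) (hcu : c ≤ u.re) (hcr : c ≤ r)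
    (hz : z ∈ tiltedHalfPlane u r) : ‖digammaRemainder z‖ ≤ 2 / (c * r ^ 2) := by
  have hstep (k : ℕ) : ‖digammaRemainder (z + k) - digammaRemainder (z + (k + 1 : ℕ))‖ ≤
      1 / (4 * (c / 2) * (r + c * k - c / 2) ^ 2) -
        1 / (4 * (c / 2) * (r + c * (k + 1 : ℕ) - c / 2) ^ 2) := by
    have hpos : c ≤ r + c * k := le_add_of_le_of_nonneg hcr (by positivity)
    have hmem := add_natCast_mem_tiltedHalfPlane hcu hz k
    have hmem' : z + k + 1 ∈ tiltedHalfPlane u (r + c * k) := by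
      have := add_natCast_mem_tiltedHalfPlane hcu hmem 1
      rw [Nat.cast_one, Nat.cast_one, mul_one] at this
      exact tiltedHalfPlane_anti u (le_add_of_nonneg_right hc.le) this
    have hslit := tiltedHalfPlane_subset_slitPlane (hc.le.trans hcu) (hc.trans_le hpos)
    calc _ ≤ 1 / (r + c * k) ^ 3 := by
          rw [Nat.cast_add_one, ← add_assoc, digammaRemainder_sub_add_one (hslit hmem)]
          simpa using norm_log_sub_log_sub_trapezoid_le (convex_tiltedHalfPlane _ _) hslit
            (hc.trans_le hpos) (fun _ => le_norm_of_mem_tiltedHalfPlane hu) hmem hmem'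
      _ ≤ _ := one_div_cube_le (half_pos hc) ((half_lt_self hc).trans_le hpos)
      _ = _ := by push_cast; ring
  have h := norm_le_of_tendsto_zero_of_norm_sub_le (tendsto_digammaRemainder_add_natCast z)
    (fun k => by positivity) hstep
  have hr : 0 < r := hc.trans_le hcr
  calc ‖digammaRemainder z‖ ≤ 1 / (4 * (c / 2) * (r - c / 2) ^ 2) := by simpa using h
    _ ≤ 1 / (4 * (c / 2) * (r / 2) ^ 2) := by
      gcongr
      linarith
    _ = 2 / (c * r ^ 2) := by
      field_simp
      norm_num

end Remainder

section Asymptotics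

variable {x : ℂ}

lemma tendsto_sum_digammaRemainder (hx : x ∈ slitPlane) :
    Tendsto (fun N => ∑ n ∈ Finset.range N, digammaRemainder ((n + 1) * x)) atTop (𝓝 (S1 x)) := by
  obtain ⟨u, c, hc, hu, hcu, hxu⟩ := exists_mem_tiltedHalfPlane hx
  have hbound (n : ℕ) :
      ‖digammaRemainder ((n + 1) * x)‖ ≤ 2 / c ^ 3 * (1 / ((n + 1 : ℕ) : ℝ) ^ 2) := by
    have hmem := natCast_mul_mem_tiltedHalfPlane hxu (n + 1)
    rw [Nat.cast_add_one, Nat.cast_add_one] at hmem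
    refine (norm_digammaRemainder_le hc hu hcu ?_ hmem).trans_eq ?_
    · exact le_mul_of_one_le_left hc.le (by simp)
    · push_cast
      field_simp
  have hsum : Summable fun n : ℕ => digammaRemainder ((n + 1) * x) :=
    .of_norm_bounded (((summable_nat_add_iff 1).2
      (Real.summable_one_div_nat_pow.2 one_lt_two)).mul_left _) hbound
  have hS1 : S1 x = ∑' n : ℕ, digammaRemainder ((n + 1) * x) := by
    simp only [S1, digammaRemainder, mul_assoc]
    rfl
  rw [hS1]
  exact hsum.hasSum.tendsto_sum_nat

lemma tendsto_sum_digammaRemainder_add_natCast (hx : x ∈ slitPlane) :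
    Tendsto (fun N : ℕ => ∑ n ∈ Finset.range N, digammaRemainder ((n + 1) * x + N)) atTop
      (𝓝 0) := by
  obtain ⟨u, c, hc, hu, hcu, hxu⟩ := exists_mem_tiltedHalfPlane hx
  refine tendsto_sum_range_zero_of_norm_le (C := 2 / c ^ 3) fun N n hn => ?_
  have hmem := mul_add_natCast_mem_tiltedHalfPlane hc.le hcu hxu (n + 1) N
  rw [Nat.cast_add_one] at hmem
  have hN : (1 : ℝ) ≤ N := Nat.one_le_cast.2 (Nat.one_le_of_lt hn)
  exact (norm_digammaRemainder_le hc hu hcu (le_mul_of_one_le_right hc.le hN) hmem).trans_eq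
    (by ring)

/-- The sum `∑ 1 / (n x + m)` over `1 ≤ n, m ≤ N`. -/
noncomputable def latticeSum (x : ℂ) (N : ℕ) : ℂ :=
  ∑ n ∈ Finset.range N, ∑ m ∈ Finset.range N, ((n + 1) * x + (m + 1))⁻¹

lemma inv_mul_latticeSum_inv (hx : x ≠ 0) (N : ℕ) :
    x⁻¹ * latticeSum x⁻¹ N = latticeSum x N := by
  rw [latticeSum, latticeSum, Finset.sum_comm, Finset.mul_sum]
  refine Finset.sum_congr rfl fun n _ => ?_
  rw [Finset.mul_sum]
  refine Finset.sum_congr rfl fun m _ => ?_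
  rw [← mul_inv, mul_add, mul_left_comm, mul_inv_cancel₀ hx]
  ring

lemma sum_log_mul (hx : x ≠ 0) (N : ℕ) :
    ∑ n ∈ Finset.range N, log ((n + 1) * x) = N * log x + Real.log N ! := by
  induction N with
  | zero => simp
  | succ N ih =>
    have hlog := log_natCast_mul N.succ_ne_zero hx
    rw [Nat.cast_succ] at hlog
    rw [Finset.sum_range_succ, ih, hlog, Nat.factorial_succ, Nat.cast_mul,
      Real.log_mul (by positivity) (by positivity)]
    push_cast
    ring

lemma digammaRemainder_sub_add_natCast {z : ℂ} (hz : z ∈ slitPlane) (N : ℕ) :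
    digammaRemainder z - digammaRemainder (z + N) =
      log (z + N) - log z - ∑ m ∈ Finset.range N, (z + (m + 1))⁻¹
        - 1 / 2 * z⁻¹ + 1 / 2 * (z + N)⁻¹ := by
  have hsum : ∑ m ∈ Finset.range N, (z + m)⁻¹ + (z + N)⁻¹ =
      ∑ m ∈ Finset.range N, (z + (m + 1))⁻¹ + z⁻¹ := by
    rw [← Finset.sum_range_succ, Finset.sum_range_succ']
    simp
  rw [digammaRemainder, digammaRemainder,
    digamma_add_natCast (ne_neg_natCast_of_mem_slitPlane hz), one_div, one_div, mul_inv, mul_inv]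
  linear_combination -hsum

lemma natCast_add_one_mul_mem_slitPlane (hx : x ∈ slitPlane) (n : ℕ) :
    (n + 1) * x ∈ slitPlane := by
  obtain ⟨u, c, hc, -, hcu, hxu⟩ := exists_mem_tiltedHalfPlane hx
  have hmem := natCast_mul_mem_tiltedHalfPlane hxu (n + 1)
  rw [Nat.cast_add_one, Nat.cast_add_one] at hmem
  have hpos : 0 < ((n : ℝ) + 1) * c := by positivity
  exact tiltedHalfPlane_subset_slitPlane (hc.le.trans hcu) hpos hmem

lemma sum_digammaRemainder_sub (hx : x ∈ slitPlane) (N : ℕ) :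
    ∑ n ∈ Finset.range N, digammaRemainder ((n + 1) * x)
        - ∑ n ∈ Finset.range N, digammaRemainder ((n + 1) * x + N) =
      ∑ n ∈ Finset.range N, log ((n + 1) * x + N) - (N * log x + Real.log N !)
        - latticeSum x N - x⁻¹ / 2 * harmonic N
        + 1 / 2 * ∑ n ∈ Finset.range N, ((n + 1) * x + N)⁻¹ := by
  have hharm : x⁻¹ / 2 * harmonic N = ∑ n ∈ Finset.range N, 1 / 2 * ((n + 1) * x)⁻¹ := by
    rw [harmonic, Rat.cast_sum, Finset.mul_sum]
    refine Finset.sum_congr rfl fun n _ => ?_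
    push_cast
    rw [mul_inv]
    ring
  rw [← sum_log_mul (slitPlane_ne_zero hx), hharm, latticeSum, Finset.mul_sum]
  simp only [← Finset.sum_sub_distrib, ← Finset.sum_add_distrib]
  refine Finset.sum_congr rfl fun n _ => ?_
  rw [digammaRemainder_sub_add_natCast (natCast_add_one_mul_mem_slitPlane hx n)]

lemma one_add_mem_slitPlane (hx : x ∈ slitPlane) : 1 + x ∈ slitPlane := by
  rw [mem_slitPlane_iff] at hx ⊢
  simp only [add_re, one_re, add_im, one_im, zero_add]
  exact hx.imp_left fun h => by linarith

lemma log_natCast_mul_one_add (hx : x ∈ slitPlane) {N : ℕ} (hN : N ≠ 0) :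
    log (N * x + N) = Real.log N + log (1 + x) := by
  rw [← log_natCast_mul hN (slitPlane_ne_zero (one_add_mem_slitPlane hx))]
  ring_nf

lemma tendsto_sum_div_mul_add_natCast (hx : x ∈ slitPlane) :
    Tendsto (fun N : ℕ => x * ∑ n ∈ Finset.range N, ((n + 1) * x + N)⁻¹) atTop
      (𝓝 (log (1 + x))) := by
  obtain ⟨u, c, hc, hu, hcu, hxu⟩ := exists_mem_tiltedHalfPlane hx
  have herr : Tendsto (fun N : ℕ => ∑ n ∈ Finset.range N,
      (log ((n + 1 : ℕ) * x + N) - log (n * x + N) - x * ((n + 1 : ℕ) * x + N)⁻¹)) atTop (𝓝 0) := by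
    refine tendsto_sum_range_zero_of_norm_le (C := ‖x‖ ^ 2 / c ^ 2) fun N n hn => ?_
    have hN : 0 < c * N := mul_pos hc (Nat.cast_pos.2 (Nat.zero_lt_of_lt hn))
    have hsub : ((n + 1 : ℕ) * x + N) - (n * x + N) = x := by push_cast; ring
    have h := norm_log_sub_log_sub_div_le (convex_tiltedHalfPlane u (c * N))
      (tiltedHalfPlane_subset_slitPlane (hc.le.trans hcu) hN) hN
      (fun _ => le_norm_of_mem_tiltedHalfPlane hu)
      (mul_add_natCast_mem_tiltedHalfPlane hc.le hcu hxu n N)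
      (mul_add_natCast_mem_tiltedHalfPlane hc.le hcu hxu (n + 1) N)
    rw [hsub] at h
    exact h.trans_eq (by ring)
  have hlim := herr.const_sub (log (1 + x))
  rw [sub_zero] at hlim
  refine hlim.congr' ?_
  filter_upwards [eventually_ne_atTop 0] with N hN
  rw [Finset.sum_sub_distrib, Finset.sum_range_sub (fun n : ℕ => log (n * x + N)),
    log_natCast_mul_one_add hx hN, ← Finset.mul_sum, Nat.cast_zero, zero_mul, zero_add, natCast_log]
  push_cast
  ring

lemma tendsto_sum_log_mul_add_natCast_sub (hx : x ∈ slitPlane) :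
    Tendsto (fun N : ℕ => x * ∑ n ∈ Finset.range N, log ((n + 1) * x + N)
      - (N * x * Real.log N + (N * (1 + x) + x / 2) * log (1 + x) - N * x)) atTop (𝓝 0) := by
  obtain ⟨u, c, hc, hu, hcu, hxu⟩ := exists_mem_tiltedHalfPlane hx
  have herr : Tendsto (fun N : ℕ => ∑ n ∈ Finset.range N,
      ((((n + 1 : ℕ) * x + N) * log ((n + 1 : ℕ) * x + N) - ((n + 1 : ℕ) * x + N))
        - ((n * x + N) * log (n * x + N) - (n * x + N))
        - x / 2 * (log (n * x + N) + log ((n + 1 : ℕ) * x + N)))) atTop (𝓝 0) := by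
    refine tendsto_sum_range_zero_of_norm_le (C := ‖x‖ ^ 3 / (2 * c ^ 2)) fun N n hn => ?_
    have hN : 0 < c * N := mul_pos hc (Nat.cast_pos.2 (Nat.zero_lt_of_lt hn))
    have hsub : ((n + 1 : ℕ) * x + N) - (n * x + N) = x := by push_cast; ring
    have h := norm_mul_log_sub_trapezoid_le (convex_tiltedHalfPlane u (c * N))
      (tiltedHalfPlane_subset_slitPlane (hc.le.trans hcu) hN) hN
      (fun _ => le_norm_of_mem_tiltedHalfPlane hu)
      (mul_add_natCast_mem_tiltedHalfPlane hc.le hcu hxu n N)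
      (mul_add_natCast_mem_tiltedHalfPlane hc.le hcu hxu (n + 1) N)
    rw [hsub] at h
    exact h.trans_eq (by ring)
  have hlim := herr.neg
  rw [neg_zero] at hlim
  refine hlim.congr' ?_
  filter_upwards [eventually_ne_atTop 0] with N hN
  have hsucc : ∑ n ∈ Finset.range N, log (n * x + N) =
      ∑ n ∈ Finset.range N, log ((n + 1 : ℕ) * x + N) - log (1 + x) := by
    have h := Finset.sum_range_sub (fun n : ℕ => log (n * x + N)) N
    rw [Finset.sum_sub_distrib, log_natCast_mul_one_add hx hN, Nat.cast_zero, zero_mul, zero_add,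
      natCast_log] at h
    linear_combination -h
  rw [Finset.sum_sub_distrib,
    Finset.sum_range_sub (fun n : ℕ => (n * x + N) * log (n * x + N) - (n * x + N)),
    ← Finset.mul_sum, Finset.sum_add_distrib, hsucc, log_natCast_mul_one_add hx hN, Nat.cast_zero,
    zero_mul, zero_add, natCast_log]
  push_cast
  ring

lemma tendsto_log_factorial_sub : Tendsto (fun N : ℕ => Real.log N !
    - (N * Real.log N - N + 1 / 2 * Real.log (2 * π) + 1 / 2 * Real.log N)) atTop (𝓝 0) := by
  have h := (Stirling.tendsto_stirlingSeq_sqrt_pi.log (by positivity)).sub_const (Real.log √π)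
  rw [sub_self] at h
  refine h.congr' ?_
  filter_upwards [eventually_gt_atTop 0] with N hN
  rw [Stirling.log_stirlingSeq_formula, Real.log_div (by positivity) (by positivity), Real.log_exp,
    Real.log_mul two_ne_zero (by positivity), Real.log_mul two_ne_zero (by positivity),
    Real.log_sqrt (by positivity)]
  ring

/-- The `N`-th approximation to `F1 x`: an elementary function of `x` minus the lattice sum. -/
noncomputable def periodApprox (x : ℂ) (N : ℕ) : ℂ :=
  (1 + x⁻¹) * ((N + 1 / 2) * log (1 + x) - 1 / 2 * Real.log N - Real.eulerMascheroniConstant / 2)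
    - (N + 1 / 2) * log x - latticeSum x N

lemma log_two_pi_div (hx : x ∈ slitPlane) : log (2 * π / x) = Real.log (2 * π) - log x := by
  have h := log_ofReal_mul Real.two_pi_pos (inv_ne_zero (slitPlane_ne_zero hx))
  rwa [log_inv x (slitPlane_arg_ne_pi hx), ofReal_mul, ofReal_ofNat, ← div_eq_mul_inv,
    ← sub_eq_add_neg] at h

lemma tendsto_periodApprox (hx : x ∈ slitPlane) : Tendsto (periodApprox x) atTop (𝓝 (F1 x)) := by
  have hx0 := slitPlane_ne_zero hx
  have hγ := (continuous_ofReal.tendsto _).comp Real.tendsto_harmonic_sub_log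
  have hfac := (continuous_ofReal.tendsto _).comp tendsto_log_factorial_sub
  have hrem := (tendsto_sum_digammaRemainder hx).sub (tendsto_sum_digammaRemainder_add_natCast hx)
  have hlog := (tendsto_sum_log_mul_add_natCast_sub hx).const_mul x⁻¹
  have hinv := (tendsto_sum_div_mul_add_natCast hx).const_mul (x⁻¹ / 2)
  have h := (((((hrem.sub hlog).add hfac).sub hinv).add (hγ.const_mul (x⁻¹ / 2))).add_const
    (1 / 2 * x⁻¹ * log (1 + x) - x⁻¹ / 2 * Real.eulerMascheroniConstant
      - 1 / 2 * (Real.eulerMascheroniConstant - log (2 * π / x))))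
  convert h using 2 with N
  · have hsum := sum_digammaRemainder_sub hx N
    rw [hsum, log_two_pi_div hx, periodApprox, Function.comp_apply, Function.comp_apply]
    push_cast
    field_simp
    ring
  · rw [F1, ofReal_zero]
    ring

lemma inv_mem_slitPlane (hx : x ∈ slitPlane) : x⁻¹ ∈ slitPlane := by
  rw [mem_slitPlane_iff_arg] at hx ⊢
  rw [arg_inv, if_neg hx.1]
  exact ⟨fun h => by linarith [neg_pi_lt_arg x], inv_ne_zero hx.2⟩

lemma log_one_add_inv (hx : x ∈ slitPlane) : log (1 + x⁻¹) = log (1 + x) - log x := by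
  have hx0 := slitPlane_ne_zero hx
  have hπ := slitPlane_arg_ne_pi hx
  have him : (1 + x).im = x.im := by simp
  have harg : (1 + x).arg - x.arg ∈ Ioc (-π) π := by
    rcases le_or_gt 0 x.im with h | h
    · have hx_arg := arg_nonneg_iff.2 h
      have hx1_arg := arg_nonneg_iff.2 (him ▸ h)
      have hlt := (arg_le_pi x).lt_of_ne hπ
      constructor <;> linarith [arg_le_pi (1 + x)]
    · have hx_arg := arg_neg_iff.2 h
      have hx1_arg := arg_neg_iff.2 (him ▸ h)
      constructor <;> linarith [neg_pi_lt_arg x, neg_pi_lt_arg (1 + x)]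
  have hmul : 1 + x⁻¹ = (1 + x) * x⁻¹ := by field_simp; ring
  have harg_inv : x⁻¹.arg = -x.arg := by rw [arg_inv, if_neg hπ]
  rw [hmul, log_mul (slitPlane_ne_zero (one_add_mem_slitPlane hx)) (inv_ne_zero hx0)
    (by rwa [harg_inv, ← sub_eq_add_neg]), log_inv x hπ, sub_eq_add_neg]

lemma inv_mul_periodApprox_inv (hx : x ∈ slitPlane) (N : ℕ) :
    x⁻¹ * periodApprox x⁻¹ N = periodApprox x N := by
  have hx0 := slitPlane_ne_zero hx
  have hL := inv_mul_latticeSum_inv hx0 N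
  rw [periodApprox, periodApprox, log_one_add_inv hx, log_inv x (slitPlane_arg_ne_pi hx), ← hL,
    inv_inv]
  field_simp
  ring

end Asymptotics

end RamanujanPeriod

theorem ramanujan_two_term_relation (x : ℂ) (hx : x ∈ Complex.slitPlane) :
    F1 x = (1 / x) * F1 (1 / x) := by
  have hinv := (RamanujanPeriod.tendsto_periodApprox
    (RamanujanPeriod.inv_mem_slitPlane hx)).const_mul x⁻¹
  rw [one_div]
  exact tendsto_nhds_unique (RamanujanPeriod.tendsto_periodApprox hx)
    (hinv.congr (RamanujanPeriod.inv_mul_periodApprox_inv hx))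
end

section
/- For x in ℂ \ (-∞, 0], the function 𝓢₁ satisfies the three-term relation 𝓢₁(x) - 𝓢₁(x+1) - (1/(x+1))·𝓢₁(x/(x+1)) = -(1/(2(x+1)))·(γ - log(2π) - x·log(x/(x+1))). -/
open MeasureTheory Set

/-!
Write `φ(z) = ψ(z) - log z + 1 / (2 z)`, so that `S1 x = ∑ φ(n x)`. Then `φ(z) = -∑ t(z + m)`,
where `t(w)` is the error of the trapezoidal rule for `1 / z` on `[w, w + 1]`: both sides change by
`t(z)` under `z ↦ z + 1`, both tend to `0` along `z, z + 1, z + 2, …` for positive `z`, and both are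
analytic. Hence `-S1 x` is the sum of `t` over the points `n x + m` with `1 ≤ n` and `0 ≤ m`.

Among these points, those with `n ≤ m` give `-S1 (x + 1)`, and those with `m < n` are `x + 1` times
the points `k x / (x + 1) + m`, where `k = n - m`. Thus `S1 x - S1 (x + 1)` and
`S1 (x / (x + 1)) / (x + 1)` are sums over the same triangle `0 ≤ m < n`. Since `w ↦ w + x + 1`
maps the row `n` into the row `n + 1`, the difference of the two row sums telescopes in `n`. The
limit comes from `∑ 1 / (n x + m) → log ((x + 1) / x)`, from the trapezoidal rule for `log`, from
Stirling's formula and from `H_n - log n → γ`.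
-/

namespace ThreeTermRelation

open Complex Filter Finset Topology

section DoubleSeries

variable {α : Type*} [AddCommMonoid α] [TopologicalSpace α] [ContinuousAdd α] [RegularSpace α]

lemma hasSum_sum_antidiagonal {g : ℕ × ℕ → α} {a : α} (hg : HasSum g a) :
    HasSum (fun n => ∑ p ∈ antidiagonal n, g p) a := by
  have hsigma := (HasAntidiagonal.sigmaAntidiagonalEquivProd.hasSum_iff.mpr hg).sigma
    fun n => hasSum_fintype _
  exact hsigma.congr_fun fun n => ((antidiagonal n).sum_coe_sort g).symm

lemma summable_prod_comp_add_iff_of_nonneg {f : ℕ → ℝ} (hf : ∀ n, 0 ≤ f n) :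
    Summable (fun p : ℕ × ℕ => f (p.1 + p.2)) ↔ Summable fun n : ℕ => (n + 1) * f n := by
  have hfiber (n : ℕ) : ∑' p : antidiagonal n, f (p.1.1 + p.1.2) = (n + 1) * f n := by
    rw [tsum_fintype, (antidiagonal n).sum_coe_sort fun p => f (p.1 + p.2),
      sum_congr rfl fun p hp => by rw [mem_antidiagonal.mp hp]]
    simp
  rw [← HasAntidiagonal.sigmaAntidiagonalEquivProd.summable_iff]
  refine (summable_sigma_of_nonneg fun _ => hf _).trans ?_
  exact (and_iff_right fun _ => Summable.of_finite).trans (summable_congr hfiber)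

end DoubleSeries

section SlitPlane

variable {x z w : ℂ} {a b : ℝ}

lemma ofReal_mul_add_ofReal_mem_slitPlane (hx : x ∈ slitPlane) (ha : 0 ≤ a) (hb : 0 ≤ b)
    (hab : 0 < a + b) : (a : ℂ) * x + b ∈ slitPlane := by
  rcases ha.eq_or_lt with rfl | ha
  · simpa using hab
  rw [mem_slitPlane_iff] at hx ⊢
  simp only [add_re, re_ofReal_mul, ofReal_re, add_im, im_ofReal_mul, ofReal_im, add_zero]
  exact hx.imp (fun hre => by positivity) (mul_ne_zero ha.ne')

lemma natCast_mul_add_natCast_mem_slitPlane (hx : x ∈ slitPlane) {n : ℕ} (hn : n ≠ 0) (m : ℕ) :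
    (n : ℂ) * x + m ∈ slitPlane := by
  have hn' : (0 : ℝ) < n := by positivity
  simpa using ofReal_mul_add_ofReal_mem_slitPlane hx hn'.le m.cast_nonneg (by positivity)

lemma natCast_mul_mem_slitPlane (hx : x ∈ slitPlane) {n : ℕ} (hn : n ≠ 0) :
    (n : ℂ) * x ∈ slitPlane := by
  simpa using natCast_mul_add_natCast_mem_slitPlane hx hn 0

lemma add_natCast_mem_slitPlane (hz : z ∈ slitPlane) (m : ℕ) : z + m ∈ slitPlane := by
  simpa using natCast_mul_add_natCast_mem_slitPlane hz one_ne_zero m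

lemma add_one_mem_slitPlane (hz : z ∈ slitPlane) : z + 1 ∈ slitPlane := by
  simpa using add_natCast_mem_slitPlane hz 1

lemma ne_neg_natCast_of_mem_slitPlane (hz : z ∈ slitPlane) (m : ℕ) : z ≠ -m := fun h =>
  slitPlane_ne_zero (add_natCast_mem_slitPlane hz m) (by rw [h, neg_add_cancel])

lemma exists_pos_forall_mul_add_le_norm {K : Set ℂ} (hK : IsCompact K) (hKs : K ⊆ slitPlane) :
    ∃ c > 0, ∀ x ∈ K, ∀ a b : ℝ, 0 ≤ a → 0 ≤ b → c * (a + b) ≤ ‖(a : ℂ) * x + b‖ := by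
  obtain ⟨c, hc, hmin⟩ := (hK.prod (isCompact_Icc (a := (0 : ℝ)) (b := 1))).exists_forall_le'
    (f := fun p : ℂ × ℝ => ‖(p.2 : ℂ) * p.1 + (1 - p.2 : ℝ)‖) (a := 0) (by fun_prop)
    fun p hp => norm_pos_iff.mpr <| slitPlane_ne_zero <|
      ofReal_mul_add_ofReal_mem_slitPlane (hKs hp.1) hp.2.1 (sub_nonneg.mpr hp.2.2) (by simp)
  refine ⟨c, hc, fun x hx a b ha hb => ?_⟩
  rcases (add_nonneg ha hb).eq_or_lt with h | h
  · simp [← h]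
  have hconvex : (a : ℂ) * x + b =
      (a + b : ℝ) * ((a / (a + b) : ℝ) * x + (1 - a / (a + b) : ℝ)) := by
    have : (a : ℂ) + b ≠ 0 := mod_cast h.ne'
    push_cast
    field_simp
    ring
  rw [hconvex, norm_mul, norm_real, Real.norm_of_nonneg h.le, mul_comm]
  gcongr
  exact hmin (x, a / (a + b)) ⟨hx, by positivity, (div_le_one h).mpr (by linarith)⟩

lemma arg_nonpos_of_im_nonpos (hz : z ∈ slitPlane) (him : z.im ≤ 0) : arg z ≤ 0 := by
  rcases him.lt_or_eq with hlt | heq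
  · exact (arg_neg_iff.mpr hlt).le
  · have hre : 0 < z.re := (mem_slitPlane_iff.mp hz).resolve_right (not_not.mpr heq)
    exact (arg_eq_zero_iff.mpr ⟨hre.le, heq⟩).le

lemma arg_sub_arg_mem_Ioo (hz : z ∈ slitPlane) (hw : w ∈ slitPlane) (him : 0 ≤ z.im * w.im) :
    arg z - arg w ∈ Ioo (-Real.pi) Real.pi := by
  have hz_lt := (arg_le_pi z).lt_of_ne (slitPlane_arg_ne_pi hz)
  have hw_lt := (arg_le_pi w).lt_of_ne (slitPlane_arg_ne_pi hw)
  rcases mul_nonneg_iff.mp him with ⟨hz_im, hw_im⟩ | ⟨hz_im, hw_im⟩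
  · have hz_arg := arg_nonneg_iff.mpr hz_im
    have hw_arg := arg_nonneg_iff.mpr hw_im
    constructor <;> linarith
  · have hz_arg := arg_nonpos_of_im_nonpos hz hz_im
    have hw_arg := arg_nonpos_of_im_nonpos hw hw_im
    constructor <;> linarith [neg_pi_lt_arg z, neg_pi_lt_arg w]

lemma log_div_of_im_mul_im_nonneg (hz : z ∈ slitPlane) (hw : w ∈ slitPlane)
    (him : 0 ≤ z.im * w.im) : log (z / w) = log z - log w := by
  obtain ⟨hlt, hgt⟩ := arg_sub_arg_mem_Ioo hz hw him
  rw [← log_exp (x := log z - log w) (by simpa [log_im] using hlt)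
      (by simpa [log_im] using hgt.le),
    exp_sub, exp_log (slitPlane_ne_zero hz), exp_log (slitPlane_ne_zero hw)]

lemma div_mem_slitPlane_of_im_mul_im_nonneg (hz : z ∈ slitPlane) (hw : w ∈ slitPlane)
    (him : 0 ≤ z.im * w.im) : z / w ∈ slitPlane := by
  refine mem_slitPlane_iff_arg.mpr ⟨?_, div_ne_zero (slitPlane_ne_zero hz) (slitPlane_ne_zero hw)⟩
  rw [← log_im, log_div_of_im_mul_im_nonneg hz hw him, sub_im, log_im, log_im]
  exact (arg_sub_arg_mem_Ioo hz hw him).2.ne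

end SlitPlane

section TrapezoidalRule

/-- The error of the one-step trapezoidal rule on `[w, w + 1]` for a function `f` with primitive
`F`. The primitive is an argument, so that no path of integration has to be chosen. -/
noncomputable def trapezoidError (f F : ℂ → ℂ) (w : ℂ) : ℂ :=
  (f w + f (w + 1)) / 2 - (F (w + 1) - F w)

lemma sum_range_trapezoidError (f F : ℂ → ℂ) (z : ℂ) (N : ℕ) :
    ∑ m ∈ range N, trapezoidError f F (z + m) =
      ∑ m ∈ range N, f (z + m + 1) + (f z - f (z + N)) / 2 - (F (z + N) - F z) := by
  induction N with
  | zero => simp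
  | succ N ih =>
    rw [sum_range_succ, ih, sum_range_succ, trapezoidError]
    push_cast
    rw [← add_assoc]
    ring

/- With `E u` the error on `[w, w + u]`, one has `E' = (f w - f (w + u)) / 2 + u / 2 * f' (w + u)`
and `E'' = u / 2 * f'' (w + u)`, while `E` and `E'` vanish at `u = 0`. -/
lemma norm_trapezoidError_le {f F f' f'' : ℂ → ℂ} {w : ℂ} {C : ℝ}
    (hF : ∀ u ∈ Icc (0 : ℝ) 1, HasDerivAt F (f (w + u)) (w + u))
    (hf : ∀ u ∈ Icc (0 : ℝ) 1, HasDerivAt f (f' (w + u)) (w + u))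
    (hf' : ∀ u ∈ Icc (0 : ℝ) 1, HasDerivAt f' (f'' (w + u)) (w + u))
    (hC : ∀ u ∈ Icc (0 : ℝ) 1, ‖f'' (w + u)‖ ≤ C) :
    ‖trapezoidError f F w‖ ≤ C / 2 := by
  have hC₀ : 0 ≤ C := (norm_nonneg _).trans (hC 0 (by simp))
  let E (u : ℂ) : ℂ := u / 2 * (f w + f (w + u)) - (F (w + u) - F w)
  let E' (u : ℂ) : ℂ := (f w - f (w + u)) / 2 + u / 2 * f' (w + u)
  have hE (u : ℝ) (hu : u ∈ Icc (0 : ℝ) 1) : HasDerivAt E (E' u) u := by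
    refine ((((hasDerivAt_id (u : ℂ)).div_const 2).mul
      (((hf u hu).comp_const_add w (u : ℂ)).const_add (f w))).sub
      (((hF u hu).comp_const_add w (u : ℂ)).sub_const (F w))).congr_deriv ?_
    simp only [E', id]
    ring
  have hE' (u : ℝ) (hu : u ∈ Icc (0 : ℝ) 1) : HasDerivAt E' (u / 2 * f'' (w + u)) u := by
    refine (((((hf u hu).comp_const_add w (u : ℂ)).const_sub (f w)).div_const 2).add
      (((hasDerivAt_id (u : ℂ)).div_const 2).mul
      ((hf' u hu).comp_const_add w (u : ℂ)))).congr_deriv ?_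
    simp only [id]
    ring
  have hE''_le (u : ℝ) (hu : u ∈ Icc (0 : ℝ) 1) : ‖(u : ℂ) / 2 * f'' (w + u)‖ ≤ C / 2 := by
    rw [norm_mul, norm_div, norm_real, Real.norm_of_nonneg hu.1, RCLike.norm_ofNat]
    nlinarith [hC u hu, hu.1, hu.2, norm_nonneg (f'' (w + u))]
  have hE'_le (u : ℝ) (hu : u ∈ Icc (0 : ℝ) 1) : ‖E' u‖ ≤ C / 2 := by
    have := norm_image_sub_le_of_norm_deriv_le_segment' (f := fun u : ℝ => E' u)
      (fun u hu => (hE' u hu).comp_ofReal.hasDerivWithinAt)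
      (fun u hu => hE''_le u (Ico_subset_Icc_self hu)) u hu
    have hE'_zero : E' 0 = 0 := by simp [E']
    rw [ofReal_zero, hE'_zero, sub_zero, sub_zero] at this
    exact this.trans (mul_le_of_le_one_right (by positivity) hu.2)
  simpa [E, trapezoidError, div_mul_eq_mul_div] using
    norm_image_sub_le_of_norm_deriv_le_segment_01' (f := fun u : ℝ => E u)
      (fun u hu => (hE u hu).comp_ofReal.hasDerivWithinAt)
      (fun u hu => hE'_le u (Ico_subset_Icc_self hu))

/-- The error of the trapezoidal rule on `[w, w + 1]` for `z ↦ z⁻¹`. -/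
noncomputable def trapezoidErrorInv (w : ℂ) : ℂ := trapezoidError (fun z => z⁻¹) log w

/-- The error of the trapezoidal rule on `[w, w + 1]` for the logarithm. -/
noncomputable def trapezoidErrorLog (w : ℂ) : ℂ := trapezoidError log (fun z => z * log z - z) w

variable {w : ℂ} {r : ℝ}

lemma norm_trapezoidErrorInv_le (hw : ∀ u : ℝ, 0 ≤ u → w + u ∈ slitPlane) (hr : 0 < r)
    (hrw : ∀ u : ℝ, 0 ≤ u → r ≤ ‖w + u‖) : ‖trapezoidErrorInv w‖ ≤ 1 / r ^ 3 := by
  have hw₀ (u : ℝ) (hu : 0 ≤ u) : w + u ≠ 0 := slitPlane_ne_zero (hw u hu)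
  have hinv (z : ℂ) (hz : z ≠ 0) : HasDerivAt (fun z => -(z ^ 2)⁻¹) (2 / z ^ 3) z := by
    refine ((hasDerivAt_pow 2 z).inv (pow_ne_zero 2 hz)).neg.congr_deriv ?_
    field_simp
    ring
  refine (norm_trapezoidError_le (f' := fun z => -(z ^ 2)⁻¹) (f'' := fun z => 2 / z ^ 3)
    (C := 2 / r ^ 3) (fun u hu => hasDerivAt_log (hw u hu.1))
    (fun u hu => hasDerivAt_inv (hw₀ u hu.1)) (fun u hu => hinv _ (hw₀ u hu.1))
    fun u hu => ?_).trans_eq (by ring)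
  rw [norm_div, norm_pow, RCLike.norm_ofNat]
  gcongr
  exact hrw u hu.1

lemma norm_trapezoidErrorLog_le (hw : ∀ u : ℝ, 0 ≤ u → w + u ∈ slitPlane) (hr : 0 < r)
    (hrw : ∀ u : ℝ, 0 ≤ u → r ≤ ‖w + u‖) : ‖trapezoidErrorLog w‖ ≤ 1 / (2 * r ^ 2) := by
  have hw₀ (u : ℝ) (hu : 0 ≤ u) : w + u ≠ 0 := slitPlane_ne_zero (hw u hu)
  have hprim (z : ℂ) (hz : z ∈ slitPlane) : HasDerivAt (fun z => z * log z - z) (log z) z := by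
    refine (((hasDerivAt_id z).mul (hasDerivAt_log hz)).sub (hasDerivAt_id z)).congr_deriv ?_
    simp [slitPlane_ne_zero hz]
  refine (norm_trapezoidError_le (f' := fun z => z⁻¹) (f'' := fun z => -(z ^ 2)⁻¹)
    (C := 1 / r ^ 2) (fun u hu => hprim _ (hw u hu.1))
    (fun u hu => hasDerivAt_log (hw u hu.1)) (fun u hu => hasDerivAt_inv (hw₀ u hu.1))
    fun u hu => ?_).trans_eq (by ring)
  rw [norm_neg, norm_inv, norm_pow, ← one_div]
  gcongr
  exact hrw u hu.1

lemma exists_norm_trapezoidError_le {K : Set ℂ} (hK : IsCompact K) (hKs : K ⊆ slitPlane) :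
    ∃ c > 0, ∀ x ∈ K, ∀ a b : ℝ, 0 ≤ a → 0 ≤ b → 0 < a + b →
      ‖trapezoidErrorInv (a * x + b)‖ ≤ 1 / (c * (a + b)) ^ 3 ∧
      ‖trapezoidErrorLog (a * x + b)‖ ≤ 1 / (2 * (c * (a + b)) ^ 2) := by
  obtain ⟨c, hc, hle⟩ := exists_pos_forall_mul_add_le_norm hK hKs
  refine ⟨c, hc, fun x hx a b ha hb hab => ?_⟩
  have hray (u : ℝ) : (a * x + b + u : ℂ) = a * x + (b + u : ℝ) := by push_cast; ring
  have hmem (u : ℝ) (hu : 0 ≤ u) : a * x + b + u ∈ slitPlane := by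
    rw [hray]
    exact ofReal_mul_add_ofReal_mem_slitPlane (hKs hx) ha (add_nonneg hb hu) (by linarith)
  have hnorm (u : ℝ) (hu : 0 ≤ u) : c * (a + b) ≤ ‖a * x + b + u‖ := by
    rw [hray]
    exact le_trans (by gcongr; linarith) (hle x hx a (b + u) ha (add_nonneg hb hu))
  have hpos : 0 < c * (a + b) := by positivity
  exact ⟨norm_trapezoidErrorInv_le hmem hpos hnorm, norm_trapezoidErrorLog_le hmem hpos hnorm⟩

end TrapezoidalRule

section DigammaRemainder

variable {z : ℂ}

/-- The remainder `φ(z) = ψ(z) - log z + 1 / (2 z)` of the asymptotic expansion of the digamma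
function, so that `S1 x = ∑ φ(n x)`. -/
noncomputable def digammaRemainder (z : ℂ) : ℂ := digammaC z - log z + 1 / (2 * z)

lemma digammaRemainder_add_one (hz : z ∈ slitPlane) :
    digammaRemainder (z + 1) = digammaRemainder z + trapezoidErrorInv z := by
  have hz₀ := slitPlane_ne_zero hz
  have hz₁ := slitPlane_ne_zero (add_one_mem_slitPlane hz)
  have hrec : digammaC (z + 1) = digammaC z + z⁻¹ :=
    digamma_apply_add_one z (ne_neg_natCast_of_mem_slitPlane hz)
  rw [digammaRemainder, digammaRemainder, trapezoidErrorInv, trapezoidError, hrec]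
  field_simp
  ring

lemma digammaRemainder_add_natCast (hz : z ∈ slitPlane) (N : ℕ) :
    digammaRemainder (z + N) =
      digammaRemainder z + ∑ m ∈ range N, trapezoidErrorInv (z + m) := by
  induction N with
  | zero => simp
  | succ N ih =>
    rw [sum_range_succ, ← add_assoc, ← ih,
      ← digammaRemainder_add_one (add_natCast_mem_slitPlane hz N), Nat.cast_succ, add_assoc]

lemma digammaC_ofReal {r : ℝ} (hr : 0 < r) :
    digammaC r = (deriv (Real.log ∘ Real.Gamma) r : ℝ) := by
  have hne (m : ℕ) : r ≠ -m := by linarith [m.cast_nonneg (α := ℝ)]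
  have hreal := Real.differentiableAt_Gamma hne
  have hcomplex := (differentiableAt_Gamma (r : ℂ) (mod_cast hne)).hasDerivAt.comp_ofReal
  simp only [Gamma_ofReal] at hcomplex
  rw [Function.comp_def, deriv.log hreal (Real.Gamma_pos_of_pos hr).ne', digammaC, Gamma_ofReal,
    hcomplex.unique hreal.hasDerivAt.ofReal_comp, ofReal_div]

-- By `Γ(r + 1) = r Γ(r)`, the slope of the convex function `log Γ` on `[r, r + 1]` is `log r`.
lemma deriv_log_Gamma_le_log_and_log_le {r : ℝ} (hr : 0 < r) :
    deriv (Real.log ∘ Real.Gamma) r ≤ Real.log r ∧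
      Real.log r ≤ deriv (Real.log ∘ Real.Gamma) (r + 1) := by
  have hdiff {s : ℝ} (hs : 0 < s) : DifferentiableAt ℝ (Real.log ∘ Real.Gamma) s :=
    (Real.differentiableAt_Gamma fun m => by linarith [m.cast_nonneg (α := ℝ)]).log
      (Real.Gamma_pos_of_pos hs).ne'
  have hslope : slope (Real.log ∘ Real.Gamma) r (r + 1) = Real.log r := by
    rw [slope_def_field, Function.comp_apply, Function.comp_apply, Real.Gamma_add_one hr.ne',
      Real.log_mul hr.ne' (Real.Gamma_pos_of_pos hr).ne']
    ring
  have hr₁ : 0 < r + 1 := by linarith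
  rw [← hslope]
  exact ⟨Real.convexOn_log_Gamma.deriv_le_slope hr hr₁ (by linarith) (hdiff hr),
    Real.convexOn_log_Gamma.slope_le_deriv hr hr₁ (by linarith) (hdiff hr₁)⟩

lemma norm_digammaRemainder_ofReal_le {r : ℝ} (hr : 0 < r) :
    ‖digammaRemainder r‖ ≤ 1 / (2 * r) := by
  obtain ⟨hle, hge⟩ := deriv_log_Gamma_le_log_and_log_le hr
  have hrec : deriv (Real.log ∘ Real.Gamma) (r + 1) = deriv (Real.log ∘ Real.Gamma) r + r⁻¹ := by
    have := digamma_apply_add_one r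
      (ne_neg_natCast_of_mem_slitPlane (ofReal_mem_slitPlane.mpr hr))
    rw [← ofReal_one, ← ofReal_add] at this
    exact_mod_cast (digammaC_ofReal (by positivity)).symm.trans
      (this.trans (congrArg (· + (r : ℂ)⁻¹) (digammaC_ofReal hr)))
  have hreal : digammaRemainder r =
      (deriv (Real.log ∘ Real.Gamma) r - Real.log r + 1 / (2 * r) : ℝ) := by
    rw [digammaRemainder, digammaC_ofReal hr, ← ofReal_log hr.le]
    push_cast
    rfl
  have hhalf : r⁻¹ = 1 / (2 * r) + 1 / (2 * r) := by field_simp; norm_num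
  rw [hreal, norm_real, Real.norm_eq_abs, abs_le]
  constructor <;> linarith

lemma tendsto_digammaRemainder_ofReal_add_natCast {r : ℝ} (hr : 0 < r) :
    Tendsto (fun N : ℕ => digammaRemainder (r + N)) atTop (𝓝 0) := by
  have hbound (N : ℕ) : ‖digammaRemainder (r + N)‖ ≤ 1 / (2 * (r + N)) := by
    simpa using norm_digammaRemainder_ofReal_le (r := r + N) (by positivity)
  refine squeeze_zero_norm hbound ?_
  simp only [one_div]
  exact ((tendsto_atTop_add_const_left _ r tendsto_natCast_atTop_atTop).const_mul_atTop
    two_pos).inv_tendsto_atTop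

lemma differentiableOn_digammaRemainder : DifferentiableOn ℂ digammaRemainder slitPlane := by
  have hGamma : DifferentiableOn ℂ Gamma slitPlane := fun z hz =>
    (differentiableAt_Gamma z (ne_neg_natCast_of_mem_slitPlane hz)).differentiableWithinAt
  have hdigamma : DifferentiableOn ℂ digammaC slitPlane :=
    (hGamma.deriv isOpen_slitPlane).fun_div hGamma
      fun z hz => Gamma_ne_zero (ne_neg_natCast_of_mem_slitPlane hz)
  refine (hdigamma.fun_sub (differentiableOn_id.clog fun _ => id)).fun_add ?_
  exact (differentiableOn_const 1).fun_div (differentiableOn_id.const_mul 2)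
    fun z hz => mul_ne_zero two_ne_zero (slitPlane_ne_zero hz)

lemma differentiableAt_trapezoidErrorInv (hz : z ∈ slitPlane) :
    DifferentiableAt ℂ trapezoidErrorInv z := by
  have hz₁ := add_one_mem_slitPlane hz
  have hz₀ := slitPlane_ne_zero hz
  have hz₁₀ := slitPlane_ne_zero hz₁
  unfold trapezoidErrorInv trapezoidError
  fun_prop (disch := assumption)

lemma summable_one_div_mul_pow {c : ℝ} {k : ℕ} (hk : 1 < k) :
    Summable fun n : ℕ => 1 / (c * (n + 1)) ^ k := by
  have := ((summable_nat_add_iff 1).mpr (Real.summable_one_div_nat_pow.mpr hk)).mul_left (1 / c ^ k)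
  simpa [mul_pow, mul_comm] using this

lemma summableLocallyUniformlyOn_trapezoidErrorInv_add_natCast :
    SummableLocallyUniformlyOn (fun (m : ℕ) z => trapezoidErrorInv (z + m)) slitPlane := by
  refine SummableLocallyUniformlyOn_of_locally_bounded isOpen_slitPlane fun K hKs hK => ?_
  obtain ⟨c, -, hle⟩ := exists_norm_trapezoidError_le hK hKs
  refine ⟨_, summable_one_div_mul_pow (c := c) (k := 3) (by norm_num), fun m z hz => ?_⟩
  simpa [add_comm] using (hle z hz 1 m zero_le_one m.cast_nonneg (by positivity)).1

lemma eqOn_slitPlane_of_forall_pos {f g : ℂ → ℂ} (hf : DifferentiableOn ℂ f slitPlane)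
    (hg : DifferentiableOn ℂ g slitPlane) (hfg : ∀ r : ℝ, 0 < r → f r = g r) :
    EqOn f g slitPlane := by
  have hofReal : Tendsto ofReal (𝓝[≠] 1) (𝓝[≠] 1) := by
    simpa using continuous_ofReal.continuousWithinAt.tendsto_nhdsWithin (x := 1)
      (s := {1}ᶜ) (t := {1}ᶜ) fun r hr => by simpa using hr
  have hfreq : ∃ᶠ r : ℝ in 𝓝[≠] 1, f r = g r :=
    (eventually_nhdsWithin_of_eventually_nhds
      ((lt_mem_nhds one_pos).mono hfg)).frequently
  exact (hf.analyticOnNhd isOpen_slitPlane).eqOn_of_preconnected_of_frequently_eq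
    (hg.analyticOnNhd isOpen_slitPlane)
    (starConvex_one_slitPlane.isPathConnected one_mem_slitPlane).isConnected.isPreconnected
    one_mem_slitPlane (hofReal.frequently hfreq)

lemma hasSum_trapezoidErrorInv (hz : z ∈ slitPlane) :
    HasSum (fun m : ℕ => trapezoidErrorInv (z + m)) (-digammaRemainder z) := by
  have hsum := summableLocallyUniformlyOn_trapezoidErrorInv_add_natCast
  have hdiff : DifferentiableOn ℂ (fun z => -∑' m : ℕ, trapezoidErrorInv (z + m)) slitPlane :=
    (hsum.differentiableOn isOpen_slitPlane fun m z hz =>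
      differentiableAt_comp_add_const.mpr <|
        differentiableAt_trapezoidErrorInv (add_natCast_mem_slitPlane hz m)).fun_neg
  have heq : EqOn digammaRemainder (fun z => -∑' m : ℕ, trapezoidErrorInv (z + m)) slitPlane := by
    refine eqOn_slitPlane_of_forall_pos differentiableOn_digammaRemainder hdiff fun r hr => ?_
    have hr' := ofReal_mem_slitPlane.mpr hr
    have hpartial := (hsum.summable hr').hasSum.tendsto_sum_nat.const_add (digammaRemainder r)
    simp only [← digammaRemainder_add_natCast hr'] at hpartial
    exact eq_neg_of_add_eq_zero_left
      (tendsto_nhds_unique hpartial (tendsto_digammaRemainder_ofReal_add_natCast hr))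
  rw [heq hz, neg_neg]
  exact (hsum.summable hz).hasSum

end DigammaRemainder

section ConeSums

variable {x : ℂ}

lemma summable_trapezoidErrorInv_cone (hx : x ∈ slitPlane) :
    Summable fun p : ℕ × ℕ => trapezoidErrorInv ((p.1 + 1 : ℕ) * x + p.2) := by
  obtain ⟨c, hc, hle⟩ := exists_norm_trapezoidError_le isCompact_singleton
    (singleton_subset_iff.mpr hx)
  have hdiag : Summable fun n : ℕ => (n + 1) * (1 / (c * (n + 1)) ^ 3) := by
    refine ((summable_one_div_mul_pow (c := c) one_lt_two).mul_left (1 / c)).congr fun n => ?_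
    field_simp
  refine .of_norm_bounded
    ((summable_prod_comp_add_iff_of_nonneg fun n => by positivity).mpr hdiag) fun p => ?_
  simpa [add_right_comm] using
    (hle x rfl (p.1 + 1) p.2 (by positivity) (by positivity) (by positivity)).1

lemma hasSum_trapezoidErrorInv_row (hx : x ∈ slitPlane) (n : ℕ) :
    HasSum (fun m : ℕ => trapezoidErrorInv ((n + 1 : ℕ) * x + m))
      (-digammaRemainder ((n + 1 : ℕ) * x)) :=
  hasSum_trapezoidErrorInv (natCast_mul_mem_slitPlane hx n.succ_ne_zero)

lemma hasSum_trapezoidErrorInv_cone (hx : x ∈ slitPlane) :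
    HasSum (fun p : ℕ × ℕ => trapezoidErrorInv ((p.1 + 1 : ℕ) * x + p.2)) (-S1 x) := by
  have hsum := summable_trapezoidErrorInv_cone hx
  convert hsum.hasSum using 1
  rw [hsum.tsum_prod, tsum_congr fun n => (hasSum_trapezoidErrorInv_row hx n).tsum_eq, tsum_neg]
  simp only [S1, digammaRemainder, Nat.cast_succ, mul_assoc]

lemma hasSum_digammaRemainder_natCast_mul (hx : x ∈ slitPlane) :
    HasSum (fun n : ℕ => digammaRemainder ((n + 1 : ℕ) * x)) (S1 x) := by
  simpa using
    ((hasSum_trapezoidErrorInv_cone hx).prod_fiberwise (hasSum_trapezoidErrorInv_row hx)).neg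

lemma tendsto_digammaRemainder_natCast_mul (hx : x ∈ slitPlane) :
    Tendsto (fun n : ℕ => digammaRemainder (n * x)) atTop (𝓝 0) :=
  (tendsto_add_atTop_iff_nat 1).mp
    (hasSum_digammaRemainder_natCast_mul hx).summable.tendsto_atTop_zero

lemma digammaRemainder_natCast_mul_add_one (hx : x ∈ slitPlane) {n : ℕ} (hn : n ≠ 0) :
    digammaRemainder (n * (x + 1)) =
      digammaRemainder (n * x) + ∑ m ∈ range n, trapezoidErrorInv (n * x + m) := by
  rw [mul_add_one, digammaRemainder_add_natCast (natCast_mul_mem_slitPlane hx hn)]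

lemma hasSum_sum_range_trapezoidErrorInv (hx : x ∈ slitPlane) :
    HasSum (fun n : ℕ => ∑ m ∈ range (n + 1), trapezoidErrorInv ((n + 1 : ℕ) * x + m))
      (S1 (x + 1) - S1 x) := by
  refine ((hasSum_digammaRemainder_natCast_mul (add_one_mem_slitPlane hx)).sub
    (hasSum_digammaRemainder_natCast_mul hx)).congr_fun fun n => ?_
  rw [digammaRemainder_natCast_mul_add_one hx n.succ_ne_zero, add_sub_cancel_left]

-- With `y = x / (x + 1)` and `n = k + m`, one has `(k + 1) y + m = ((n + 1) x + m) / (x + 1)`.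
lemma hasSum_sum_range_trapezoidErrorInv_div (hx : x + 1 ≠ 0) (hy : x / (x + 1) ∈ slitPlane) :
    HasSum (fun n : ℕ => ∑ m ∈ range (n + 1), trapezoidErrorInv (((n + 1 : ℕ) * x + m) / (x + 1)))
      (-S1 (x / (x + 1))) := by
  refine (hasSum_sum_antidiagonal
    (hasSum_trapezoidErrorInv_cone hy)).congr_fun fun n => ?_
  rw [← Nat.sum_antidiagonal_swap, Nat.sum_antidiagonal_eq_sum_range_succ_mk]
  refine sum_congr rfl fun m hm => congrArg trapezoidErrorInv ?_
  push_cast [Prod.swap, Nat.cast_sub (Nat.lt_succ_iff.mp (mem_range.mp hm))]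
  field_simp
  ring

end ConeSums

section Rows

variable {x : ℂ} {n : ℕ}

/-- The sum of `f` over the points `n x + 1, …, n x + n` of the `n`-th row of the cone spanned by
`x` and `x + 1`. -/
noncomputable def rowSum (f : ℂ → ℂ) (x : ℂ) (n : ℕ) : ℂ := ∑ m ∈ range n, f (n * x + m + 1)

lemma sum_range_eq_rowSum (f : ℂ → ℂ) (x : ℂ) (n : ℕ) :
    ∑ m ∈ range n, f (n * x + m) = rowSum f x n + f (n * x) - f (n * (x + 1)) := by
  have := (sum_range_succ (fun m : ℕ => f (n * x + m)) n).symm.trans (sum_range_succ' _ n)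
  rw [eq_sub_iff_add_eq, mul_add_one, this, rowSum]
  simp [add_assoc]

lemma sum_range_eq_rowSum_succ (f : ℂ → ℂ) (x : ℂ) (n : ℕ) :
    ∑ m ∈ range n, f (n * x + m + (x + 1)) =
      rowSum f x (n + 1) - f ((n + 1 : ℕ) * (x + 1)) := by
  rw [eq_sub_iff_add_eq, rowSum, sum_range_succ]
  push_cast
  ring_nf

lemma sum_range_trapezoidError_eq_rowSum (f F : ℂ → ℂ) (x : ℂ) (n : ℕ) :
    ∑ m ∈ range n, trapezoidError f F (n * x + m) =
      rowSum f x n + (f (n * x) - f (n * (x + 1))) / 2 - (F (n * (x + 1)) - F (n * x)) := by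
  rw [sum_range_trapezoidError, mul_add_one, rowSum]

lemma inv_mul_trapezoidErrorInv_div {w c : ℂ} (hw : w ∈ slitPlane) (hc : c ∈ slitPlane)
    (hwc : w + c ∈ slitPlane) (him : 0 ≤ w.im * c.im) :
    c⁻¹ * trapezoidErrorInv (w / c) =
      (w⁻¹ + (w + c)⁻¹) / 2 - c⁻¹ * (log (w + c) - log w) := by
  have hw₀ := slitPlane_ne_zero hw
  have hc₀ := slitPlane_ne_zero hc
  have hwc₀ := slitPlane_ne_zero hwc
  have him' : 0 ≤ (w + c).im * c.im := by
    rw [add_im]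
    nlinarith [mul_self_nonneg c.im]
  rw [trapezoidErrorInv, trapezoidError, div_add_one hc₀, log_div_of_im_mul_im_nonneg hw hc him,
    log_div_of_im_mul_im_nonneg hwc hc him']
  field_simp
  ring

lemma sum_range_inv_mul_trapezoidErrorInv_div (hx : x ∈ slitPlane) (hn : n ≠ 0) :
    ∑ m ∈ range n, (x + 1)⁻¹ * trapezoidErrorInv ((n * x + m) / (x + 1)) =
      (rowSum (·⁻¹) x n + (n * x)⁻¹ - (n * (x + 1))⁻¹
        + (rowSum (·⁻¹) x (n + 1) - ((n + 1 : ℕ) * (x + 1))⁻¹)) / 2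
      - (x + 1)⁻¹ * (rowSum log x (n + 1) - log ((n + 1 : ℕ) * (x + 1))
        - (rowSum log x n + log (n * x) - log (n * (x + 1)))) := by
  have hnext (m : ℕ) : (n * x + m + (x + 1) : ℂ) = (n + 1 : ℕ) * x + (m + 1 : ℕ) := by
    push_cast
    ring
  rw [sum_congr rfl fun m _ => inv_mul_trapezoidErrorInv_div
      (natCast_mul_add_natCast_mem_slitPlane hx hn m) (add_one_mem_slitPlane hx)
      (hnext m ▸ natCast_mul_add_natCast_mem_slitPlane hx n.succ_ne_zero (m + 1))
      (by simpa [mul_assoc] using mul_nonneg n.cast_nonneg (mul_self_nonneg x.im)),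
    sum_sub_distrib, ← sum_div, ← mul_sum, sum_add_distrib, sum_sub_distrib,
    sum_range_eq_rowSum, sum_range_eq_rowSum_succ, sum_range_eq_rowSum, sum_range_eq_rowSum_succ]

lemma log_natCast_mul {z : ℂ} (hz : z ≠ 0) (hn : n ≠ 0) : log (n * z) = log n + log z := by
  rw [← ofReal_natCast, log_ofReal_mul (by positivity) hz, ofReal_log n.cast_nonneg]

/-- A closed form whose increment from `n` to `n + 1` is the difference of the sums of
`trapezoidErrorInv w` and of `(x + 1)⁻¹ * trapezoidErrorInv (w / (x + 1))` over the points
`w = n x, …, n x + n - 1`. -/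
noncomputable def rowPrimitive (x : ℂ) (n : ℕ) : ℂ :=
  (harmonic n / (x + 1) - rowSum (·⁻¹) x n) / 2
    + (rowSum log x n - Real.log n.factorial - n * log x) / (x + 1)
    - n * (log (x + 1) - log x)

lemma rowPrimitive_one (x : ℂ) :
    rowPrimitive x 1 = (log (x + 1) - log x) / (x + 1) - (log (x + 1) - log x) := by
  simp [rowPrimitive, rowSum]

lemma rowPrimitive_succ_sub (hx : x ∈ slitPlane) (hn : n ≠ 0) :
    rowPrimitive x (n + 1) - rowPrimitive x n =
      ∑ m ∈ range n, trapezoidErrorInv (n * x + m)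
        - (x + 1)⁻¹ * ∑ m ∈ range n, trapezoidErrorInv ((n * x + m) / (x + 1)) := by
  have hx₀ := slitPlane_ne_zero hx
  have hx₁ := slitPlane_ne_zero (add_one_mem_slitPlane hx)
  have hn₀ : (n : ℂ) ≠ 0 := mod_cast hn
  have hn₁ : (n + 1 : ℂ) ≠ 0 := mod_cast n.succ_ne_zero
  have hfactorial : (Real.log (n + 1).factorial : ℂ) = log (n + 1 : ℕ) + Real.log n.factorial := by
    rw [Nat.factorial_succ, Nat.cast_mul, Real.log_mul (by positivity) (by positivity), ofReal_add,
      natCast_log]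
  rw [mul_sum, sum_range_inv_mul_trapezoidErrorInv_div hx hn]
  simp only [trapezoidErrorInv]
  rw [sum_range_trapezoidError_eq_rowSum, rowPrimitive, rowPrimitive, hfactorial, harmonic_succ,
    log_natCast_mul hx₁ n.succ_ne_zero, log_natCast_mul hx₁ hn, log_natCast_mul hx₀ hn]
  push_cast
  field_simp
  ring

end Rows

section Limits

variable {x : ℂ}

lemma tendsto_rowSum_inv (hx : x ∈ slitPlane) :
    Tendsto (rowSum (·⁻¹) x) atTop (𝓝 (log (x + 1) - log x)) := by
  have hx₀ := slitPlane_ne_zero hx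
  have hx₁ := add_one_mem_slitPlane hx
  have hremainder := (tendsto_digammaRemainder_natCast_mul hx₁).sub
    (tendsto_digammaRemainder_natCast_mul hx)
  have hinv (z : ℂ) : Tendsto (fun n : ℕ => (n * z)⁻¹) atTop (𝓝 0) := by
    simpa [mul_comm] using (tendsto_inv_atTop_nhds_zero_nat (𝕜 := ℂ)).const_mul z⁻¹
  have hlim := (hremainder.sub (((hinv x).sub (hinv (x + 1))).div_const 2)).add_const
    (log (x + 1) - log x)
  simp only [sub_zero, zero_div, zero_add] at hlim
  refine hlim.congr' ((eventually_ne_atTop 0).mono fun n hn => ?_)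
  have hrow := sum_range_trapezoidError_eq_rowSum (·⁻¹) log x n
  rw [log_natCast_mul (slitPlane_ne_zero hx₁) hn, log_natCast_mul hx₀ hn] at hrow
  rw [digammaRemainder_natCast_mul_add_one hx hn]
  simp only [trapezoidErrorInv]
  linear_combination hrow

lemma tendsto_sum_range_trapezoidErrorLog (hx : x ∈ slitPlane) :
    Tendsto (fun n : ℕ => ∑ m ∈ range n, trapezoidErrorLog (n * x + m)) atTop (𝓝 0) := by
  obtain ⟨c, hc, hle⟩ := exists_norm_trapezoidError_le isCompact_singleton
    (singleton_subset_iff.mpr hx)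
  have hlim : Tendsto (fun n : ℕ => 1 / (2 * c ^ 2) * (n : ℝ)⁻¹) atTop (𝓝 0) := by
    simpa only [mul_zero] using
      (tendsto_inv_atTop_nhds_zero_nat (𝕜 := ℝ)).const_mul (1 / (2 * c ^ 2))
  refine squeeze_zero_norm' ((eventually_ne_atTop 0).mono fun n hn => ?_) hlim
  have hterm (m : ℕ) : ‖trapezoidErrorLog (n * x + m)‖ ≤ 1 / (2 * (c * n) ^ 2) := by
    have := (hle x rfl n m n.cast_nonneg m.cast_nonneg (by positivity)).2
    simp only [ofReal_natCast] at this
    refine this.trans ?_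
    gcongr
    exact le_add_of_nonneg_right m.cast_nonneg
  calc ‖∑ m ∈ range n, trapezoidErrorLog (n * x + m)‖
      ≤ ∑ m ∈ range n, 1 / (2 * (c * n) ^ 2) := norm_sum_le_of_le _ fun m _ => hterm m
    _ = 1 / (2 * c ^ 2) * (n : ℝ)⁻¹ := by
      rw [sum_const, card_range, nsmul_eq_mul]
      field_simp

lemma tendsto_log_factorial_sub :
    Tendsto (fun n : ℕ => Real.log n.factorial - (n * Real.log n - n + Real.log n / 2)) atTop
      (𝓝 (Real.log (2 * Real.pi) / 2)) := by
  have hlog := (Stirling.tendsto_stirlingSeq_sqrt_pi.log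
    (Real.sqrt_pos.mpr Real.pi_pos).ne').add_const (Real.log 2 / 2)
  rw [Real.log_sqrt Real.pi_pos.le, ← add_div, add_comm,
    ← Real.log_mul two_ne_zero Real.pi_ne_zero] at hlog
  refine hlog.congr' ((eventually_ne_atTop 0).mono fun n hn => ?_)
  have hn' : (n : ℝ) ≠ 0 := mod_cast hn
  rw [Stirling.log_stirlingSeq_formula, Real.log_mul two_ne_zero hn',
    Real.log_div hn' (Real.exp_ne_zero 1), Real.log_exp]
  ring

lemma rowPrimitive_eq (hx : x ∈ slitPlane) {n : ℕ} (hn : n ≠ 0) :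
    rowPrimitive x n =
      ((harmonic n - Real.log n : ℝ) / (x + 1) - rowSum (·⁻¹) x n) / 2
        + (∑ m ∈ range n, trapezoidErrorLog (n * x + m) + (log (x + 1) - log x) / 2
          - (Real.log n.factorial - (n * Real.log n - n + Real.log n / 2) : ℝ)) / (x + 1) := by
  have hx₀ := slitPlane_ne_zero hx
  have hx₁ := slitPlane_ne_zero (add_one_mem_slitPlane hx)
  simp only [trapezoidErrorLog]
  rw [sum_range_trapezoidError_eq_rowSum, rowPrimitive, log_natCast_mul hx₁ hn,
    log_natCast_mul hx₀ hn, ← natCast_log]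
  push_cast
  field_simp
  ring

lemma tendsto_rowPrimitive (hx : x ∈ slitPlane) :
    Tendsto (rowPrimitive x) atTop
      (𝓝 ((Real.eulerMascheroniConstant / (x + 1) - (log (x + 1) - log x)) / 2
        + ((log (x + 1) - log x) / 2 - (Real.log (2 * Real.pi) / 2 : ℝ)) / (x + 1))) := by
  have hharmonic := (continuous_ofReal.tendsto _).comp Real.tendsto_harmonic_sub_log
  have hfactorial := (continuous_ofReal.tendsto _).comp tendsto_log_factorial_sub
  have hlim := (((hharmonic.div_const (x + 1)).sub (tendsto_rowSum_inv hx)).div_const 2).add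
    ((((tendsto_sum_range_trapezoidErrorLog hx).add_const ((log (x + 1) - log x) / 2)).sub
      hfactorial).div_const (x + 1))
  rw [zero_add] at hlim
  exact hlim.congr' ((eventually_ne_atTop 0).mono fun n hn => (rowPrimitive_eq hx hn).symm)

lemma hasSum_rowPrimitive_succ_sub (hx : x ∈ slitPlane) (hy : x / (x + 1) ∈ slitPlane) :
    HasSum (fun n => rowPrimitive x (n + 1 + 1) - rowPrimitive x (n + 1))
      (S1 (x + 1) - S1 x + (x + 1)⁻¹ * S1 (x / (x + 1))) := by
  have hx₁ := slitPlane_ne_zero (add_one_mem_slitPlane hx)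
  simp only [rowPrimitive_succ_sub hx (Nat.succ_ne_zero _)]
  simpa using (hasSum_sum_range_trapezoidErrorInv hx).sub
    ((hasSum_sum_range_trapezoidErrorInv_div hx₁ hy).mul_left (x + 1)⁻¹)

end Limits

end ThreeTermRelation

open ThreeTermRelation

theorem three_term_relation_S1 (x : ℂ) (hx : x ∈ Complex.slitPlane) :
    S1 x - S1 (x + 1) - (1 / (x + 1)) * S1 (x / (x + 1)) =
      -(1 / (2 * (x + 1))) *
        ((Real.eulerMascheroniConstant : ℂ) - Complex.log (2 * Real.pi) -
          x * Complex.log (x / (x + 1))) := by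
  have hx₁ := add_one_mem_slitPlane hx
  have hx₁₀ := Complex.slitPlane_ne_zero hx₁
  have him : 0 ≤ x.im * (x + 1).im := by simpa using mul_self_nonneg x.im
  have hy := div_mem_slitPlane_of_im_mul_im_nonneg hx hx₁ him
  have hpartial := (hasSum_rowPrimitive_succ_sub hx hy).tendsto_sum_nat
  simp only [Finset.sum_range_sub (fun n => rowPrimitive x (n + 1))] at hpartial
  have hlim := ((Filter.tendsto_add_atTop_iff_nat 1).mpr (tendsto_rowPrimitive hx)).sub_const
    (rowPrimitive x 1)
  have heq := tendsto_nhds_unique hpartial hlim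
  have hlog_two_pi : Complex.log (2 * Real.pi) = (Real.log (2 * Real.pi) : ℝ) := by
    rw [Complex.ofReal_log (by positivity)]
    push_cast
    rfl
  rw [rowPrimitive_one] at heq
  rw [log_div_of_im_mul_im_nonneg hx hx₁ him, hlog_two_pi]
  push_cast at heq
  field_simp at heq ⊢
  linear_combination -heq
end

section
/- For x in ℂ \ (-∞, 0], the Ramanujan period function satisfies the three-term period relation 𝓕₁(x) - 𝓕₁(x+1) - (1/(x+1))·𝓕₁(x/(x+1)) = 0. -/
open MeasureTheory Set

/-!
Put `r = x / (x + 1)`. Since `(i + 1) x + m = (x + 1) ((j + 1) r + k)` when `i = j + k` and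
`m = k`, summing `1 / ((i + 1) x + m)` over the triangle `m ≤ i < N` along its diagonals turns the
three-term combination of the partial sums of `𝓢₁` into a closed form in which only the sum
`∑ ψ ((j + 1) r + N - j)`, over points of the segment from `N` to `N r`, is not elementary.
Because `ψ (z + 1) = log z + 1 / (2 z) + O(|z|⁻²)`, the Euler–Maclaurin formula evaluates that sum
up to `o(1)`; Stirling's formula and the limit defining `γ` then give the constants. The expansion
of `ψ` follows from its recurrence and the logarithmic derivative of Euler's limit formula for `Γ`.
-/

open Complex Filter Topology Finset
open scoped Nat Real

section SlitPlane

lemma slitPlane_ne_neg_natCast {z : ℂ} (hz : z ∈ slitPlane) (m : ℕ) : z ≠ -m := by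
  rintro rfl
  have h := neg_ofReal_mem_slitPlane.1 (mod_cast hz : -((m : ℝ) : ℂ) ∈ slitPlane)
  exact h.not_ge m.cast_nonneg

lemma ofReal_mul_add_ofReal_mem_slitPlane {p : ℂ} (hp : p ∈ slitPlane) {s t : ℝ} (hs : 0 ≤ s)
    (ht : 0 ≤ t) (hst : 0 < s + t) : s * p + t ∈ slitPlane := by
  simp only [mem_slitPlane_iff, add_re, add_im, re_ofReal_mul, im_ofReal_mul, ofReal_re,
    ofReal_im, add_zero] at hp ⊢
  rcases hs.eq_or_lt with rfl | hs
  · left; linarith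
  · exact hp.imp (fun h => by positivity) (mul_ne_zero hs.ne')

lemma add_natCast_mem_slitPlane {z : ℂ} (hz : z ∈ slitPlane) (n : ℕ) : z + n ∈ slitPlane := by
  simpa using ofReal_mul_add_ofReal_mem_slitPlane hz zero_le_one n.cast_nonneg (by positivity)

lemma succ_mul_mem_slitPlane {z : ℂ} (hz : z ∈ slitPlane) (n : ℕ) : (n + 1) * z ∈ slitPlane := by
  simpa using
    ofReal_mul_add_ofReal_mem_slitPlane hz n.cast_add_one_pos.le le_rfl (by positivity)

lemma inv_mem_slitPlane {z : ℂ} (hz : z ∈ slitPlane) : z⁻¹ ∈ slitPlane := by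
  rw [mem_slitPlane_iff_arg] at hz ⊢
  refine ⟨fun h => ?_, inv_ne_zero hz.2⟩
  rw [arg_inv, if_neg hz.1] at h
  linarith [neg_pi_lt_arg z]

lemma div_add_one_mem_slitPlane {x : ℂ} (hx : x ∈ slitPlane) : x / (x + 1) ∈ slitPlane := by
  have hx0 : x ≠ 0 := slitPlane_ne_zero hx
  have h : x / (x + 1) = (x⁻¹ + (1 : ℕ))⁻¹ := by
    rw [← inv_div, add_div, div_self hx0, one_div, add_comm, Nat.cast_one]
  exact h ▸ inv_mem_slitPlane (add_natCast_mem_slitPlane (inv_mem_slitPlane hx) 1)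

lemma exists_pos_mul_le_norm_ofReal_mul_add_ofReal {p : ℂ} (hp : p ∈ slitPlane) :
    ∃ c : ℝ, 0 < c ∧ ∀ s t : ℝ, 0 ≤ s → 0 ≤ t → c * (s + t) ≤ ‖s * p + t‖ := by
  obtain ⟨u₀, hu₀, hmin⟩ := isCompact_Icc.exists_isMinOn (nonempty_Icc.2 (zero_le_one' ℝ))
    (f := fun u : ℝ => ‖u * p + (1 - u : ℝ)‖) (by fun_prop)
  refine ⟨_, norm_pos_iff.2 <| slitPlane_ne_zero <| ofReal_mul_add_ofReal_mem_slitPlane hp hu₀.1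
    (sub_nonneg.2 hu₀.2) (by simp), fun s t hs ht => ?_⟩
  rcases (add_nonneg hs ht).eq_or_lt with hst | hst
  · simp [← hst]
  have hu : s / (s + t) ∈ Icc (0 : ℝ) 1 := ⟨by positivity, (div_le_one hst).2 (by linarith)⟩
  have hst' : (s : ℂ) + t ≠ 0 := mod_cast hst.ne'
  calc _ ≤ ‖(s / (s + t) : ℝ) * p + (1 - s / (s + t) : ℝ)‖ * (s + t) := by gcongr; exact hmin hu
    _ = ‖((s / (s + t) : ℝ) * p + (1 - s / (s + t) : ℝ)) * (s + t : ℝ)‖ := by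
      rw [norm_mul, Complex.norm_of_nonneg hst.le]
    _ = ‖s * p + t‖ := by
      congr 1
      push_cast
      field_simp
      ring

lemma ofReal_mul_add_ofReal_im_mul_im_nonneg (p : ℂ) {s s' : ℝ} (hs : 0 ≤ s) (hs' : 0 ≤ s')
    (t t' : ℝ) : 0 ≤ (s * p + t).im * (s' * p + t').im := by
  simp only [add_im, im_ofReal_mul, ofReal_im, add_zero, mul_mul_mul_comm]
  exact mul_nonneg (mul_nonneg hs hs') (mul_self_nonneg _)

lemma arg_nonpos_of_im_nonpos {z : ℂ} (hz : z ∈ slitPlane) (him : z.im ≤ 0) : z.arg ≤ 0 := by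
  by_contra! h
  have harg : z.arg < π := (arg_le_pi z).lt_of_ne (slitPlane_arg_ne_pi hz)
  have := mul_pos (norm_pos_iff.2 (slitPlane_ne_zero hz)) (Real.sin_pos_of_pos_of_lt_pi h harg)
  rw [norm_mul_sin_arg] at this
  linarith

lemma log_div_of_im_mul_im_nonneg {u v : ℂ} (hu : u ∈ slitPlane) (hv : v ∈ slitPlane)
    (h : 0 ≤ u.im * v.im) : log (u / v) = log u - log v := by
  have hv0 := slitPlane_ne_zero hv
  have hvπ := slitPlane_arg_ne_pi hv
  have hlt {w : ℂ} (hw : w ∈ slitPlane) : w.arg < π :=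
    (arg_le_pi w).lt_of_ne (slitPlane_arg_ne_pi hw)
  have hmem : u.arg + v⁻¹.arg ∈ Ioc (-π) π := by
    rw [arg_inv, if_neg hvπ]
    rcases mul_nonneg_iff.1 h with ⟨hu', hv'⟩ | ⟨hu', hv'⟩
    · have := arg_nonneg_iff.2 hu'
      have := arg_nonneg_iff.2 hv'
      constructor <;> linarith [hlt hu, hlt hv]
    · have := arg_nonpos_of_im_nonpos hu hu'
      have := arg_nonpos_of_im_nonpos hv hv'
      constructor <;> linarith [neg_pi_lt_arg u, neg_pi_lt_arg v]
  rw [div_eq_mul_inv, log_mul (slitPlane_ne_zero hu) (inv_ne_zero hv0) hmem, log_inv _ hvπ,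
    sub_eq_add_neg]

lemma log_one_add_div {z a : ℂ} (hz : z ∈ slitPlane) (hza : z + a ∈ slitPlane)
    (h : 0 ≤ (z + a).im * z.im) : log (1 + a / z) = log (z + a) - log z := by
  rw [← log_div_of_im_mul_im_nonneg hza hz h, add_div, div_self (slitPlane_ne_zero hz)]

lemma norm_log_one_add_sub_le {y : ℂ} (hy : ‖y‖ ≤ 1 / 2) :
    ‖log (1 + y) - (y - y ^ 2 / 2)‖ ≤ ‖y‖ ^ 3 := by
  have htaylor : logTaylor 3 y = y - y ^ 2 / 2 := by
    simp only [logTaylor, Finset.sum_range_succ, Finset.sum_range_zero]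
    norm_num
    ring
  have hinv : (1 - ‖y‖)⁻¹ ≤ 2 := by
    rw [inv_le_comm₀ (by linarith) (by norm_num)]
    linarith
  calc ‖log (1 + y) - (y - y ^ 2 / 2)‖ ≤ ‖y‖ ^ 3 * (1 - ‖y‖)⁻¹ / 3 := by
        simpa [htaylor, show (2 : ℝ) + 1 = 3 by norm_num] using
          norm_log_sub_logTaylor_le 2 (z := y) (by linarith)
    _ ≤ ‖y‖ ^ 3 * 2 / 3 := by gcongr
    _ ≤ ‖y‖ ^ 3 := by linarith [pow_nonneg (norm_nonneg y) 3]

end SlitPlane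

section GammaAsymptotics

lemma tendsto_deriv_of_tendsto_of_norm_le {ι E : Type*} [NormedAddCommGroup E] [NormedSpace ℂ E]
    [CompleteSpace E] {l : Filter ι} [l.IsCountablyGenerated] {f : ι → ℂ → E} {g : ℂ → E}
    {U : Set ℂ} {c : ℂ} {R M : ℝ} (hU : IsOpen U) (hR : 0 < R) (hRU : Metric.closedBall c R ⊆ U)
    (hf : ∀ᶠ i in l, DifferentiableOn ℂ (f i) U) (hg : DifferentiableOn ℂ g U)
    (hM : ∀ᶠ i in l, ∀ z ∈ Metric.sphere c R, ‖f i z‖ ≤ M)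
    (hlim : ∀ z ∈ Metric.sphere c R, Tendsto (f · z) l (𝓝 (g z))) :
    Tendsto (fun i => deriv (f i) c) l (𝓝 (deriv g c)) := by
  have hmem (θ : ℝ) : circleMap c R θ ∈ Metric.sphere c R := circleMap_mem_sphere c hR.le θ
  have hcderiv : Tendsto (fun i => cderiv R (f i) c) l (𝓝 (cderiv R g c)) := by
    refine Tendsto.const_smul ?_ _
    refine intervalIntegral.tendsto_integral_filter_of_dominated_convergence
      (fun _ => R * ((R ^ 2)⁻¹ * M)) ?_ ?_ (by simp) ?_
    · filter_upwards [hf] with i hi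
      have hcont : ContinuousOn (fun w => ((w - c) ^ 2)⁻¹ • f i w) (Metric.sphere c R) := by
        refine ContinuousOn.smul (ContinuousOn.inv₀ (by fun_prop) fun w hw => ?_)
          (hi.continuousOn.mono (Metric.sphere_subset_closedBall.trans hRU))
        exact pow_ne_zero 2 (sub_ne_zero.2 (Metric.ne_of_mem_sphere hw hR.ne'))
      exact (intervalIntegrable_iff.1 (hcont.circleIntegrable hR.le).out).aestronglyMeasurable
    · filter_upwards [hM] with i hi
      refine .of_forall fun θ _ => ?_
      simp only [deriv_circleMap, circleMap_sub_center, norm_smul, norm_mul, norm_circleMap_zero,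
        abs_of_pos hR, norm_I, mul_one, norm_inv, norm_pow]
      gcongr
      exact hi _ (hmem θ)
    · exact .of_forall fun θ _ => ((hlim _ (hmem θ)).const_smul _).const_smul _
  rw [cderiv_eq_deriv hU hg hR hRU] at hcderiv
  exact hcderiv.congr' (hf.mono fun i hi => cderiv_eq_deriv hU hi hR hRU)

lemma norm_Gamma_le_Gamma_re {s : ℂ} (hs : 0 < s.re) : ‖Gamma s‖ ≤ Real.Gamma s.re := by
  rw [Gamma_eq_integral hs, Real.Gamma_eq_integral hs]
  refine (norm_integral_le_integral_norm _).trans_eq ?_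
  refine setIntegral_congr_fun measurableSet_Ioi fun t ht => ?_
  simp [norm_cpow_eq_rpow_re_of_pos ht, norm_exp]

lemma norm_Gamma_ofReal_add_natCast {σ : ℝ} (hσ : 0 < σ) (n : ℕ) :
    ‖Gamma (σ + n)‖ = Real.Gamma (σ + n) := by
  rw [← Complex.norm_of_nonneg (Real.Gamma_pos_of_pos (by positivity : 0 < σ + n)).le,
    ← Gamma_ofReal, ofReal_add, ofReal_natCast]

lemma Gamma_add_natCast_eq_prod_mul {s : ℂ} (hs : ∀ m : ℕ, s ≠ -m) (n : ℕ) :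
    Gamma (s + n) = (∏ j ∈ range n, (s + j)) * Gamma s := by
  induction n with
  | zero => simp
  | succ n ih =>
    have hn : s + n ≠ 0 := fun h => hs n (eq_neg_of_add_eq_zero_left h)
    rw [Nat.cast_succ, ← add_assoc, Gamma_add_one _ hn, ih, prod_range_succ]
    ring

/-- The ratio `Γ(s + n + 1) / (n! n ^ s)`, which tends to `1` by Euler's limit formula; its
logarithmic derivative is `ψ(s + n + 1) - log n`. -/
noncomputable def gammaRatio (n : ℕ) (s : ℂ) : ℂ := Gamma (s + (n + 1 : ℕ)) / (n ! * n ^ s)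

lemma tendsto_gammaRatio {s : ℂ} (hs : 0 < s.re) :
    Tendsto (fun n => gammaRatio n s) atTop (𝓝 1) := by
  have hs' (m : ℕ) : s ≠ -m := slitPlane_ne_neg_natCast (.inl hs) m
  have hΓ : Gamma s ≠ 0 := Gamma_ne_zero hs'
  have hlim := (tendsto_const_nhds (x := Gamma s)).div (GammaSeq_tendsto_Gamma s) hΓ
  rw [div_self hΓ] at hlim
  refine hlim.congr fun n => ?_
  rw [Pi.div_apply, GammaSeq, gammaRatio, Gamma_add_natCast_eq_prod_mul hs']
  field_simp

lemma norm_gammaRatio_le_norm_gammaRatio_re {n : ℕ} (hn : n ≠ 0) {s : ℂ} (hs : 0 < s.re) :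
    ‖gammaRatio n s‖ ≤ ‖gammaRatio n s.re‖ := by
  have hre : (s + (n + 1 : ℕ)).re = s.re + (n + 1 : ℕ) := by simp
  have hpos : 0 < s.re + (n + 1 : ℕ) := by positivity
  simp only [gammaRatio, norm_div, norm_mul, norm_natCast_cpow_of_pos (Nat.pos_of_ne_zero hn),
    ofReal_re, norm_Gamma_ofReal_add_natCast hs]
  gcongr
  exact hre ▸ norm_Gamma_le_Gamma_re (hre ▸ hpos)

lemma norm_gammaRatio_ofReal {n : ℕ} (hn : n ≠ 0) {σ : ℝ} (hσ : 0 < σ) :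
    ‖gammaRatio n σ‖ = rexp (Real.log (Real.Gamma (σ + (n + 1 : ℕ))) - σ * Real.log n) / n ! := by
  have hΓ : 0 < Real.Gamma (σ + (n + 1 : ℕ)) := Real.Gamma_pos_of_pos (by positivity)
  rw [gammaRatio, norm_div, norm_mul, norm_natCast_cpow_of_pos (Nat.pos_of_ne_zero hn),
    norm_Gamma_ofReal_add_natCast hσ, norm_natCast, ofReal_re, Real.exp_sub, Real.exp_log hΓ,
    mul_comm σ, Real.rpow_def_of_pos (by positivity), div_div, mul_comm (n ! : ℝ)]

lemma norm_gammaRatio_le {n : ℕ} (hn : n ≠ 0) {s : ℂ} {a b : ℝ} (ha : 0 < a)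
    (hs : s.re ∈ Icc a b) : ‖gammaRatio n s‖ ≤ max ‖gammaRatio n a‖ ‖gammaRatio n b‖ := by
  have hσ : 0 < s.re := ha.trans_le hs.1
  refine (norm_gammaRatio_le_norm_gammaRatio_re hn hσ).trans ?_
  have hconvex : ConvexOn ℝ (Ioi 0)
      fun σ : ℝ => Real.log (Real.Gamma (σ + (n + 1 : ℕ))) - σ * Real.log n := by
    refine ConvexOn.sub ?_ ?_
    · exact (Real.convexOn_log_Gamma.translate_left ((n + 1 : ℕ) : ℝ)).subset
        (fun σ (hσ : 0 < σ) => show 0 < ((n + 1 : ℕ) : ℝ) + σ by positivity) (convex_Ioi 0)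
    · exact ((LinearMap.id : ℝ →ₗ[ℝ] ℝ).smulRight (Real.log n)).concaveOn (convex_Ioi 0)
  have hmax := hconvex.le_max_of_mem_Icc ha (ha.trans_le (hs.1.trans hs.2)) hs
  simp only [norm_gammaRatio_ofReal hn hσ, norm_gammaRatio_ofReal hn ha,
    norm_gammaRatio_ofReal hn (ha.trans_le (hs.1.trans hs.2))]
  rw [max_div_div_right (by positivity), ← Real.exp_monotone.map_max]
  gcongr

lemma hasDerivAt_gammaRatio {n : ℕ} (hn : n ≠ 0) {s : ℂ} (hs : 0 < s.re) :
    HasDerivAt (gammaRatio n) (gammaRatio n s * (digamma (s + (n + 1 : ℕ)) - log n)) s := by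
  have hn' : (n : ℂ) ≠ 0 := Nat.cast_ne_zero.2 hn
  have hfact : (n ! : ℂ) ≠ 0 := mod_cast n.factorial_ne_zero
  have hpow : (n : ℂ) ^ s ≠ 0 := by simp [cpow_eq_zero_iff, hn']
  have hpole (m : ℕ) : s + (n + 1 : ℕ) ≠ -m :=
    slitPlane_ne_neg_natCast (add_natCast_mem_slitPlane (.inl hs) _) m
  have hnum := (differentiableAt_Gamma _ hpole).hasDerivAt.comp_add_const s _
  have hden := ((hasDerivAt_id s).const_cpow (.inl hn')).const_mul (n ! : ℂ)
  refine (hnum.div hden (mul_ne_zero hfact hpow)).congr_deriv ?_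
  have hΓ := Gamma_ne_zero hpole
  rw [gammaRatio, digamma_def, logDeriv_apply, id_eq]
  field_simp

lemma tendsto_digamma_add_natCast_sub_log {s : ℂ} (hs : 0 < s.re) :
    Tendsto (fun n : ℕ => digamma (s + (n + 1 : ℕ)) - log n) atTop (𝓝 0) := by
  have hR : 0 < s.re / 2 := half_pos hs
  have hmem {z : ℂ} (hz : z ∈ Metric.closedBall s (s.re / 2)) :
      z.re ∈ Icc (s.re / 2) (3 * s.re / 2) := by
    have := (abs_re_le_norm (z - s)).trans (mem_closedBall_iff_norm.1 hz)
    rw [sub_re, abs_le] at this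
    constructor <;> linarith
  have hbound : ∀ᶠ n in atTop, ∀ z ∈ Metric.sphere s (s.re / 2), ‖gammaRatio n z‖ ≤ 2 := by
    have hreal {σ : ℝ} (hσ : 0 < σ) : ∀ᶠ n in atTop, ‖gammaRatio n σ‖ ≤ 2 :=
      (tendsto_gammaRatio (s := σ) (by simpa)).norm.eventually_le_const (by norm_num)
    filter_upwards [hreal hR, hreal (σ := 3 * s.re / 2) (by positivity), eventually_ne_atTop 0]
      with n h₁ h₂ hn z hz
    exact (norm_gammaRatio_le hn hR (hmem (Metric.sphere_subset_closedBall hz))).trans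
      (max_le h₁ h₂)
  have hderiv : Tendsto (fun n => deriv (gammaRatio n) s) atTop (𝓝 0) := by
    simpa using tendsto_deriv_of_tendsto_of_norm_le (g := fun _ => 1)
      (isOpen_lt continuous_const continuous_re) hR (fun z hz => hR.trans_le (hmem hz).1)
      ((eventually_ne_atTop 0).mono fun n hn z hz =>
        (hasDerivAt_gammaRatio hn hz).differentiableAt.differentiableWithinAt)
      (differentiableOn_const 1) hbound
      fun z hz => tendsto_gammaRatio (hR.trans_le (hmem (Metric.sphere_subset_closedBall hz)).1)
  have hlog := hderiv.div (tendsto_gammaRatio hs) one_ne_zero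
  rw [zero_div] at hlog
  refine hlog.congr' ?_
  filter_upwards [eventually_ne_atTop 0, (tendsto_gammaRatio hs).eventually_ne one_ne_zero]
    with n hn hne
  rw [Pi.div_apply, (hasDerivAt_gammaRatio hn hs).deriv, mul_div_cancel_left₀ _ hne]

end GammaAsymptotics

section DigammaRemainder

/-- The remainder `ψ(z) - log z + 1 / (2z)` of the two-term Stirling expansion of the digamma
function, whose values at the multiples of `x` are the summands of `S1 x`. -/
noncomputable def digammaRemainder (z : ℂ) : ℂ := digamma z - log z + 1 / (2 * z)

lemma tendsto_log_add_natCast_sub_log {z : ℂ} (hz : z ∈ slitPlane) :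
    Tendsto (fun n : ℕ => log (z + n) - log n) atTop (𝓝 0) := by
  have hlim : Tendsto (fun n : ℕ => 1 + z * (n : ℂ)⁻¹) atTop (𝓝 1) := by
    simpa using (((tendsto_inv₀_cobounded (α := ℂ)).comp
      (tendsto_natCast_atTop_cobounded (α := ℂ))).const_mul z).const_add 1
  have hlog := hlim.clog one_mem_slitPlane
  rw [log_one] at hlog
  refine hlog.congr' ((eventually_gt_atTop 0).mono fun n hn => ?_)
  have hn' : (n : ℂ) ≠ 0 := Nat.cast_ne_zero.2 hn.ne'
  beta_reduce
  rw [← log_div_of_im_mul_im_nonneg (add_natCast_mem_slitPlane hz n)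
    (natCast_mem_slitPlane.2 hn.ne') (by simp), add_div, div_self hn', add_comm, div_eq_mul_inv]

lemma tendsto_digammaRemainder_add_natCast (z : ℂ) :
    Tendsto (fun n : ℕ => digammaRemainder (z + n)) atTop (𝓝 0) := by
  obtain ⟨m, hm⟩ := exists_nat_gt (-z.re)
  have hre : 0 < (z + m).re := by
    rw [add_re, natCast_re]
    linarith
  rw [← tendsto_add_atTop_iff_nat (m + 1)]
  have hinv : Tendsto (fun n : ℕ => (2 * (z + m + 1 + n))⁻¹) atTop (𝓝 0) :=
    tendsto_inv₀_cobounded.comp <| (tendsto_mul_left_cobounded two_ne_zero).comp <|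
      (tendsto_const_add_cobounded _).comp tendsto_natCast_atTop_cobounded
  have hlim := ((tendsto_digamma_add_natCast_sub_log hre).sub (tendsto_log_add_natCast_sub_log
    (add_natCast_mem_slitPlane (.inl hre) 1))).add hinv
  simp only [sub_zero, add_zero] at hlim
  refine hlim.congr fun n => ?_
  rw [digammaRemainder]
  push_cast
  ring_nf

lemma digamma_add_one_eq {z : ℂ} (hz : z ∈ slitPlane) :
    digamma (z + 1) = digammaRemainder z + (log z + 1 / (2 * z)) := by
  have hz0 := slitPlane_ne_zero hz
  rw [digamma_apply_add_one z (slitPlane_ne_neg_natCast hz), digammaRemainder]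
  field_simp
  ring

lemma norm_digammaRemainder_sub_add_one_le {z : ℂ} (hz : z ∈ slitPlane) (h : 2 ≤ ‖z‖) :
    ‖digammaRemainder z - digammaRemainder (z + 1)‖ ≤ 2 / ‖z‖ ^ 3 := by
  have hz0 := slitPlane_ne_zero hz
  have hz1 : z + 1 ∈ slitPlane := mod_cast add_natCast_mem_slitPlane hz 1
  have hz10 := slitPlane_ne_zero hz1
  have hle : ‖1 / z‖ ≤ 1 / 2 := by
    rw [norm_div, norm_one]
    exact one_div_le_one_div_of_le two_pos h
  have hz1_norm : ‖z‖ ≤ 2 * ‖z + 1‖ := by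
    have := norm_sub_le (z + 1) 1
    rw [add_sub_cancel_right, norm_one] at this
    linarith
  have hlog := log_one_add_div hz hz1 (by simpa using mul_self_nonneg z.im)
  have hsplit : digammaRemainder z - digammaRemainder (z + 1) =
      log (1 + 1 / z) - (1 / z - (1 / z) ^ 2 / 2) - 1 / (2 * z ^ 2 * (z + 1)) := by
    rw [digammaRemainder, digammaRemainder, digamma_apply_add_one z (slitPlane_ne_neg_natCast hz),
      hlog]
    field_simp
    ring
  have htail : ‖1 / (2 * z ^ 2 * (z + 1))‖ ≤ ‖1 / z‖ ^ 3 := by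
    simp only [one_div, norm_inv, norm_mul, norm_pow, Complex.norm_ofNat, inv_pow]
    gcongr
    nlinarith [mul_le_mul_of_nonneg_left hz1_norm (sq_nonneg ‖z‖)]
  calc _ ≤ ‖1 / z‖ ^ 3 + ‖1 / z‖ ^ 3 :=
        hsplit ▸ (norm_sub_le _ _).trans (add_le_add (norm_log_one_add_sub_le hle) htail)
    _ = 2 / ‖z‖ ^ 3 := by
      rw [norm_div, norm_one]
      ring

lemma sum_range_one_div_add_natCast_pow_three_le {ρ : ℝ} (hρ : 2 ≤ ρ) (n : ℕ) :
    ∑ k ∈ range n, 1 / (ρ + k) ^ 3 ≤ 1 / ρ ^ 2 := by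
  have hterm (k : ℕ) : 1 / (ρ + k) ^ 3 ≤ 1 / (ρ + k) ^ 2 - 1 / (ρ + (k + 1 : ℕ)) ^ 2 := by
    have hk : 2 ≤ ρ + k := by linarith [k.cast_nonneg (α := ℝ)]
    have hk0 : 0 < ρ + k := by linarith
    rw [Nat.cast_succ, ← add_assoc, div_sub_div _ _ (by positivity) (by positivity),
      div_le_div_iff₀ (by positivity) (by positivity)]
    nlinarith [pow_pos hk0 2, pow_pos hk0 3, mul_nonneg (pow_pos hk0 3).le (sub_nonneg.2 hk)]
  calc _ ≤ ∑ k ∈ range n, (1 / (ρ + k) ^ 2 - 1 / (ρ + (k + 1 : ℕ)) ^ 2) :=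
        sum_le_sum fun k _ => hterm k
    _ = 1 / ρ ^ 2 - 1 / (ρ + n) ^ 2 := by
      rw [sum_range_sub' fun k : ℕ => 1 / (ρ + k) ^ 2, Nat.cast_zero, add_zero]
    _ ≤ 1 / ρ ^ 2 := sub_le_self _ (by positivity)

lemma norm_digammaRemainder_le {z : ℂ} {c ρ : ℝ} (hz : z ∈ slitPlane) (hc : 0 < c) (hρ : 2 ≤ ρ)
    (hcρ : 2 ≤ c * ρ) (h : ∀ k : ℕ, c * (ρ + k) ≤ ‖z + k‖) :
    ‖digammaRemainder z‖ ≤ 2 / c ^ 3 / ρ ^ 2 := by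
  have hstep (k : ℕ) : ‖digammaRemainder (z + k) - digammaRemainder (z + (k + 1 : ℕ))‖ ≤
      2 / c ^ 3 * (1 / (ρ + k) ^ 3) := by
    have hk : 2 ≤ ‖z + k‖ := by
      refine hcρ.trans (le_trans ?_ (h k))
      gcongr
      exact le_add_of_nonneg_right k.cast_nonneg
    rw [Nat.cast_succ, ← add_assoc]
    calc _ ≤ 2 / ‖z + k‖ ^ 3 :=
          norm_digammaRemainder_sub_add_one_le (add_natCast_mem_slitPlane hz k) hk
      _ ≤ 2 / (c * (ρ + k)) ^ 3 := by gcongr; exact h k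
      _ = _ := by rw [mul_pow, div_mul_div_comm, mul_one]
  have hsum (n : ℕ) : ‖digammaRemainder z - digammaRemainder (z + n)‖ ≤ 2 / c ^ 3 / ρ ^ 2 :=
    calc _ = ‖∑ k ∈ range n, (digammaRemainder (z + k) - digammaRemainder (z + (k + 1 : ℕ)))‖ := by
          rw [sum_range_sub' fun k : ℕ => digammaRemainder (z + k), Nat.cast_zero, add_zero]
      _ ≤ ∑ k ∈ range n, 2 / c ^ 3 * (1 / (ρ + k) ^ 3) := norm_sum_le_of_le _ fun k _ => hstep k
      _ ≤ 2 / c ^ 3 * (1 / ρ ^ 2) := by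
        rw [← mul_sum]
        gcongr
        exact sum_range_one_div_add_natCast_pow_three_le hρ n
      _ = 2 / c ^ 3 / ρ ^ 2 := mul_one_div _ _
  have hlim := ((tendsto_digammaRemainder_add_natCast z).const_sub (digammaRemainder z)).norm
  rw [sub_zero] at hlim
  exact le_of_tendsto' hlim hsum

lemma exists_norm_digammaRemainder_le {p : ℂ} (hp : p ∈ slitPlane) :
    ∃ C R : ℝ, ∀ s t : ℝ, 0 ≤ s → 0 ≤ t → R ≤ s + t →
      ‖digammaRemainder (s * p + t)‖ ≤ C / (s + t) ^ 2 := by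
  obtain ⟨c, hc, hbound⟩ := exists_pos_mul_le_norm_ofReal_mul_add_ofReal hp
  refine ⟨2 / c ^ 3, max 2 (2 / c), fun s t hs ht hR => ?_⟩
  have hst : 2 ≤ s + t := (le_max_left _ _).trans hR
  refine norm_digammaRemainder_le (ofReal_mul_add_ofReal_mem_slitPlane hp hs ht (by linarith)) hc
    hst ((div_le_iff₀' hc).1 ((le_max_right _ _).trans hR)) fun k => ?_
  simpa [add_assoc] using hbound s (t + k) hs (by positivity)

lemma summable_digammaRemainder {p : ℂ} (hp : p ∈ slitPlane) :
    Summable fun n : ℕ => digammaRemainder ((n + 1) * p) := by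
  obtain ⟨C, R, hC⟩ := exists_norm_digammaRemainder_le hp
  have hsum : Summable fun n : ℕ => C / ((n : ℝ) + 1) ^ 2 := by
    simpa [div_eq_mul_inv] using
      ((summable_nat_add_iff 1).2 (Real.summable_nat_pow_inv.2 one_lt_two)).mul_left C
  refine hsum.of_norm_bounded_eventually_nat ?_
  filter_upwards [eventually_ge_atTop ⌈R⌉₊] with n hn
  simpa using hC (n + 1) 0 (by positivity) le_rfl
    (by linarith [(Nat.le_ceil R).trans (Nat.cast_le.2 hn)])

lemma S1_eq_tsum_digammaRemainder (x : ℂ) : S1 x = ∑' n : ℕ, digammaRemainder ((n + 1) * x) := by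
  simp only [S1, digammaC, digammaRemainder, digamma_def, logDeriv_apply, mul_assoc]

lemma tendsto_sum_digammaRemainder {x : ℂ} (hx : x ∈ slitPlane) :
    Tendsto (fun N : ℕ => ∑ i ∈ range N, digammaRemainder ((i + 1) * x)) atTop (𝓝 (S1 x)) := by
  rw [S1_eq_tsum_digammaRemainder]
  exact (summable_digammaRemainder hx).hasSum.tendsto_sum_nat

end DigammaRemainder

section EulerMaclaurin

/-- A primitive of `log z + (1 - a) / (2z)`. By the Euler–Maclaurin formula, its increments over
steps of length `a` approximate `a (log z + 1 / (2z))` to second order. -/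
noncomputable def eulerMaclaurinPrimitive (a z : ℂ) : ℂ := z * log z - z + (1 - a) / 2 * log z

lemma norm_log_add_sub_eulerMaclaurinPrimitive_le {a z : ℂ} (ha : a ≠ 0) (hz : z ∈ slitPlane)
    (hza : z + a ∈ slitPlane) (him : 0 ≤ (z + a).im * z.im) (h₁ : 2 * ‖a‖ ≤ ‖z‖)
    (h₂ : ‖(1 + a) / 2‖ ≤ ‖z‖) :
    ‖log z + 1 / (2 * z) - (eulerMaclaurinPrimitive a (z + a) - eulerMaclaurinPrimitive a z) / a‖ ≤
      (‖(1 + a) / 2‖ * ‖a‖ + 2 * ‖a‖ ^ 2) / ‖z‖ ^ 2 := by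
  have hz0 := slitPlane_ne_zero hz
  have hz_pos : 0 < ‖z‖ := norm_pos_iff.2 hz0
  set ρ : ℂ := log (1 + a / z) - (a / z - (a / z) ^ 2 / 2) with hρ
  have hρ_le : ‖ρ‖ ≤ (‖a‖ / ‖z‖) ^ 3 := by
    rw [← norm_div]
    refine norm_log_one_add_sub_le ?_
    rw [norm_div, div_le_iff₀ hz_pos]
    linarith
  have hlog : log (z + a) = log z + (a / z - (a / z) ^ 2 / 2) + ρ := by
    rw [hρ, log_one_add_div hz hza him]
    ring
  have hsplit : log z + 1 / (2 * z) -
      (eulerMaclaurinPrimitive a (z + a) - eulerMaclaurinPrimitive a z) / a =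
        (1 + a) / 2 * a / (2 * z ^ 2) - (z + (1 + a) / 2) * ρ / a := by
    simp only [eulerMaclaurinPrimitive, hlog]
    field_simp
    ring
  have hmain : ‖(1 + a) / 2 * a / (2 * z ^ 2)‖ ≤ ‖(1 + a) / 2‖ * ‖a‖ / ‖z‖ ^ 2 := by
    rw [norm_div, norm_mul, norm_mul 2, norm_pow, Complex.norm_ofNat]
    gcongr
    linarith [sq_nonneg ‖z‖]
  have herror : ‖(z + (1 + a) / 2) * ρ / a‖ ≤ 2 * ‖a‖ ^ 2 / ‖z‖ ^ 2 :=
    calc _ = ‖z + (1 + a) / 2‖ * ‖ρ‖ / ‖a‖ := by rw [norm_div, norm_mul]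
      _ ≤ (2 * ‖z‖) * (‖a‖ / ‖z‖) ^ 3 / ‖a‖ := by
        gcongr
        exact (norm_add_le _ _).trans (by linarith)
      _ = _ := by field_simp
  rw [hsplit, add_div (_ * _)]
  exact (norm_sub_le _ _).trans (add_le_add hmain herror)

lemma exists_norm_digamma_sub_eulerMaclaurinPrimitive_le {r : ℂ} (hr : r ∈ slitPlane)
    (hr1 : 1 - r ≠ 0) :
    ∃ C R : ℝ, ∀ s t : ℝ, 0 ≤ s → 0 ≤ t → R ≤ s + 1 + t →
      ‖digamma ((s + 1 : ℝ) * r + (t + 1 : ℝ)) -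
        (eulerMaclaurinPrimitive (1 - r) (s * r + (t + 1 : ℝ)) -
          eulerMaclaurinPrimitive (1 - r) ((s + 1 : ℝ) * r + t)) / (1 - r)‖ ≤
      C / (s + 1 + t) ^ 2 := by
  obtain ⟨C, R, hremainder⟩ := exists_norm_digammaRemainder_le hr
  obtain ⟨c, hc, hnorm⟩ := exists_pos_mul_le_norm_ofReal_mul_add_ofReal hr
  set K : ℝ := ‖(1 + (1 - r)) / 2‖ * ‖1 - r‖ + 2 * ‖1 - r‖ ^ 2
  set B : ℝ := 2 * ‖1 - r‖ + ‖(1 + (1 - r)) / 2‖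
  refine ⟨C + K / c ^ 2, max R (B / c), fun s t hs ht hR => ?_⟩
  have hs1 : 0 ≤ s + 1 := by positivity
  have hst : 0 < s + 1 + t := by positivity
  set z : ℂ := (s + 1 : ℝ) * r + t with hz_def
  have hz : z ∈ slitPlane := ofReal_mul_add_ofReal_mem_slitPlane hr hs1 ht hst
  have hza : s * r + (t + 1 : ℝ) ∈ slitPlane :=
    ofReal_mul_add_ofReal_mem_slitPlane hr hs (by positivity) (by positivity)
  have hz_add_one : ((s + 1 : ℝ) * r + (t + 1 : ℝ) : ℂ) = z + 1 := by
    push_cast [hz_def]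
    ring
  have hz_add : s * r + (t + 1 : ℝ) = z + (1 - r) := by
    push_cast [hz_def]
    ring
  have hz_norm : c * (s + 1 + t) ≤ ‖z‖ := hnorm _ _ hs1 ht
  have hB : B ≤ ‖z‖ := ((div_le_iff₀' hc).1 ((le_max_right _ _).trans hR)).trans hz_norm
  have him := ofReal_mul_add_ofReal_im_mul_im_nonneg r hs hs1 (t + 1) t
  rw [hz_add] at hza him
  rw [hz_add_one, hz_add, digamma_add_one_eq hz, add_sub_assoc]
  have hprimitive := norm_log_add_sub_eulerMaclaurinPrimitive_le hr1 hz hza him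
    ((le_add_of_nonneg_right (norm_nonneg _)).trans hB)
    ((le_add_of_nonneg_left (by positivity)).trans hB)
  calc _ ≤ C / (s + 1 + t) ^ 2 + K / ‖z‖ ^ 2 :=
        (norm_add_le _ _).trans
          (add_le_add (hremainder _ _ hs1 ht ((le_max_left _ _).trans hR)) hprimitive)
    _ ≤ C / (s + 1 + t) ^ 2 + K / (c * (s + 1 + t)) ^ 2 := by gcongr
    _ = (C + K / c ^ 2) / (s + 1 + t) ^ 2 := by rw [mul_pow, ← div_div, add_div C]

lemma eulerMaclaurinPrimitive_natCast_sub {r : ℂ} (hr : r ≠ 0) {N : ℕ} (hN : 0 < N) :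
    eulerMaclaurinPrimitive (1 - r) N - eulerMaclaurinPrimitive (1 - r) (N * r) =
      (1 - r) * (N * log N - N) - r * (N + 1 / 2) * log r := by
  have hlog : log (N * r) = log N + log r := by
    simpa using log_ofReal_mul (r := N) (mod_cast hN) hr
  rw [eulerMaclaurinPrimitive, eulerMaclaurinPrimitive, hlog]
  ring

lemma tendsto_sum_digamma_sub_eulerMaclaurinPrimitive {r : ℂ} (hr : r ∈ slitPlane)
    (hr1 : 1 - r ≠ 0) :
    Tendsto (fun N : ℕ => ∑ j ∈ range N, digamma ((j + 1) * r + (N - j)) -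
      (eulerMaclaurinPrimitive (1 - r) N - eulerMaclaurinPrimitive (1 - r) (N * r)) / (1 - r))
      atTop (𝓝 0) := by
  obtain ⟨C, R, hC⟩ := exists_norm_digamma_sub_eulerMaclaurinPrimitive_le hr hr1
  have hlim : Tendsto (fun N : ℕ => C * (N : ℝ)⁻¹) atTop (𝓝 0) := by
    simpa using (tendsto_inv_atTop_nhds_zero_nat (𝕜 := ℝ)).const_mul C
  refine squeeze_zero_norm' ?_ hlim
  filter_upwards [eventually_ge_atTop ⌈R⌉₊] with N hN
  set P : ℕ → ℂ := fun j => eulerMaclaurinPrimitive (1 - r) (j * r + (N - j)) with hP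
  have hterm (j : ℕ) (hj : j ∈ range N) :
      ‖digamma ((j + 1) * r + (N - j)) - (P j - P (j + 1)) / (1 - r)‖ ≤ C / N ^ 2 := by
    have hjN : (j : ℝ) + 1 ≤ N := mod_cast Finset.mem_range.1 hj
    have h := hC j (N - (j + 1)) j.cast_nonneg (by linarith)
      (by linarith [(Nat.le_ceil R).trans (Nat.cast_le.2 hN)])
    rw [show (N : ℝ) - (j + 1) + 1 = N - j by ring, add_sub_cancel] at h
    simpa [hP] using h
  have htelescope : eulerMaclaurinPrimitive (1 - r) N - eulerMaclaurinPrimitive (1 - r) (N * r) =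
      ∑ j ∈ range N, (P j - P (j + 1)) := by
    rw [sum_range_sub']
    simp [hP]
  rw [htelescope, sum_div, ← sum_sub_distrib]
  calc _ ≤ ∑ _j ∈ range N, C / (N : ℝ) ^ 2 := norm_sum_le_of_le _ hterm
    _ = C * (N : ℝ)⁻¹ := by
      rw [sum_const, card_range, nsmul_eq_mul]
      rcases eq_or_ne (N : ℝ) 0 with h | h
      · simp [h]
      · field_simp

end EulerMaclaurin

section FiniteIdentity

lemma digamma_add_natCast {z : ℂ} (hz : ∀ m : ℕ, z ≠ -m) (n : ℕ) :
    digamma (z + n) = digamma z + ∑ k ∈ range n, 1 / (z + k) := by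
  induction n with
  | zero => simp
  | succ n ih =>
    have hzn (m : ℕ) : z + n ≠ -m := fun h => hz (m + n) (by push_cast; linear_combination h)
    rw [Nat.cast_succ, ← add_assoc, digamma_apply_add_one _ hzn, ih, sum_range_succ, one_div,
      add_assoc]

lemma sum_range_digammaRemainder {p : ℂ} (hp : p ≠ 0) (N : ℕ) :
    ∑ i ∈ range N, digammaRemainder ((i + 1) * p) =
      ∑ i ∈ range N, digamma ((i + 1) * p) - ((Real.log N ! : ℂ) + N * log p)
        + harmonic N / 2 / p := by
  induction N with
  | zero => simp
  | succ N ih =>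
    have hlog : log ((N + 1) * p) = Real.log (N + 1) + log p := by
      simpa using log_ofReal_mul (r := N + 1) (by positivity) hp
    have hinv : 1 / (2 * (((N : ℂ) + 1) * p)) = ((N : ℂ) + 1)⁻¹ / 2 / p := by
      rw [one_div, mul_inv, mul_inv]
      ring
    rw [sum_range_succ, sum_range_succ, ih, digammaRemainder, hlog, harmonic_succ,
      Nat.factorial_succ, Nat.cast_mul, Real.log_mul (by positivity) (by positivity)]
    push_cast
    linear_combination hinv

lemma sum_one_div_succ_mul_add {x : ℂ} (hx1 : x + 1 ≠ 0) (N : ℕ) :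
    ∑ i ∈ range N, ∑ m ∈ range (i + 1), 1 / ((i + 1) * x + m) =
      1 / (x + 1) * ∑ j ∈ range N, ∑ k ∈ range (N - j), 1 / ((j + 1) * (x / (x + 1)) + k) :=
  calc _ = ∑ i ∈ range N, ∑ j ∈ range (i + 1),
        1 / (((j + (i - j : ℕ) : ℂ) + 1) * x + (i - j : ℕ)) := by
        refine sum_congr rfl fun i _ => ?_
        rw [← sum_range_reflect]
        refine sum_congr rfl fun j hj => ?_
        rw [Nat.add_sub_cancel, Nat.cast_sub (Nat.lt_succ_iff.1 (Finset.mem_range.1 hj)),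
          add_sub_cancel]
    _ = ∑ j ∈ range N, ∑ k ∈ range (N - j), 1 / (((j + k : ℂ) + 1) * x + k) :=
        sum_range_diag_flip N fun j k : ℕ => 1 / (((j + k : ℂ) + 1) * x + k)
    _ = _ := by
        simp only [mul_sum, one_div_mul_one_div]
        refine sum_congr rfl fun j _ => sum_congr rfl fun k _ => ?_
        congr 1
        field_simp
        ring

lemma sum_digamma_add_one_sub_sum_digamma {x : ℂ} (hx : x ∈ slitPlane) (N : ℕ) :
    ∑ i ∈ range N, digamma ((i + 1) * (x + 1)) - ∑ i ∈ range N, digamma ((i + 1) * x) =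
      1 / (x + 1) * (∑ j ∈ range N, digamma ((j + 1) * (x / (x + 1)) + (N - j)) -
        ∑ j ∈ range N, digamma ((j + 1) * (x / (x + 1)))) := by
  have hx1 : x + 1 ≠ 0 := slitPlane_ne_zero (mod_cast add_natCast_mem_slitPlane hx 1)
  have hleft (i : ℕ) : digamma ((i + 1) * (x + 1)) - digamma ((i + 1) * x) =
      ∑ m ∈ range (i + 1), 1 / ((i + 1) * x + m) := by
    rw [sub_eq_iff_eq_add',
      ← digamma_add_natCast (slitPlane_ne_neg_natCast (succ_mul_mem_slitPlane hx i))]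
    push_cast
    rw [mul_add, mul_one]
  have hright (j : ℕ) (hj : j ∈ range N) : digamma ((j + 1) * (x / (x + 1)) + (N - j)) -
      digamma ((j + 1) * (x / (x + 1))) =
        ∑ k ∈ range (N - j), 1 / ((j + 1) * (x / (x + 1)) + k) := by
    rw [sub_eq_iff_eq_add', ← digamma_add_natCast (slitPlane_ne_neg_natCast
      (succ_mul_mem_slitPlane (div_add_one_mem_slitPlane hx) j)),
      Nat.cast_sub (Finset.mem_range.1 hj).le]
  rw [← sum_sub_distrib, ← sum_sub_distrib, sum_congr rfl hright, ← sum_one_div_succ_mul_add hx1,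
    sum_congr rfl fun i _ => hleft i]

lemma log_div_add_one {x : ℂ} (hx : x ∈ slitPlane) :
    log (x / (x + 1)) = log x - log (x + 1) :=
  log_div_of_im_mul_im_nonneg hx (mod_cast add_natCast_mem_slitPlane hx 1)
    (by simpa using mul_self_nonneg x.im)

lemma sum_digammaRemainder_period_combination {x : ℂ} (hx : x ∈ slitPlane) (N : ℕ) :
    ∑ i ∈ range N, digammaRemainder ((i + 1) * x) -
      ∑ i ∈ range N, digammaRemainder ((i + 1) * (x + 1)) -
      1 / (x + 1) * ∑ i ∈ range N, digammaRemainder ((i + 1) * (x / (x + 1))) =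
    1 / (x + 1) * (Real.log N ! - harmonic N / 2 - x * N * log (x / (x + 1)) -
      ∑ j ∈ range N, digamma ((j + 1) * (x / (x + 1)) + (N - j))) := by
  have hx0 : x ≠ 0 := slitPlane_ne_zero hx
  have hx1 : x + 1 ≠ 0 := slitPlane_ne_zero (mod_cast add_natCast_mem_slitPlane hx 1)
  have hinv : 1 / (x + 1) * (x + 1) = 1 := one_div_mul_cancel hx1
  rw [sum_range_digammaRemainder hx0, sum_range_digammaRemainder hx1,
    sum_range_digammaRemainder (div_ne_zero hx0 hx1), div_div_eq_mul_div]
  linear_combination -sum_digamma_add_one_sub_sum_digamma hx N + N * log_div_add_one hx +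
    (N * log (x / (x + 1)) - harmonic N / 2 / x) * hinv

end FiniteIdentity

section PeriodRelation

lemma tendsto_log_factorial_sub_harmonic :
    Tendsto (fun N : ℕ => Real.log N ! - harmonic N / 2 - N * Real.log N + N) atTop
      (𝓝 ((Real.log (2 * π) - Real.eulerMascheroniConstant) / 2)) := by
  have hstirling := Stirling.tendsto_stirlingSeq_sqrt_pi.log (Real.sqrt_pos.2 Real.pi_pos).ne'
  have hlim := (hstirling.sub (Real.tendsto_harmonic_sub_log.div_const 2)).add_const
    (Real.log 2 / 2)
  have hvalue : Real.log √π - Real.eulerMascheroniConstant / 2 + Real.log 2 / 2 =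
      (Real.log (2 * π) - Real.eulerMascheroniConstant) / 2 := by
    rw [Real.log_sqrt Real.pi_pos.le, Real.log_mul two_ne_zero Real.pi_ne_zero]
    ring
  rw [hvalue] at hlim
  refine hlim.congr' ((eventually_gt_atTop 0).mono fun N hN => ?_)
  have hN' : (N : ℝ) ≠ 0 := Nat.cast_ne_zero.2 hN.ne'
  rw [Stirling.log_stirlingSeq_formula, Real.log_mul two_ne_zero hN',
    Real.log_div hN' (Real.exp_ne_zero 1), Real.log_exp]
  ring

lemma S1_period_combination {x : ℂ} (hx : x ∈ slitPlane) :
    S1 x - S1 (x + 1) - 1 / (x + 1) * S1 (x / (x + 1)) =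
      1 / (x + 1) * ((log (2 * π) - Real.eulerMascheroniConstant) / 2 +
        x * log (x / (x + 1)) / 2) := by
  have hx1 : x + 1 ∈ slitPlane := mod_cast add_natCast_mem_slitPlane hx 1
  have hr : x / (x + 1) ∈ slitPlane := div_add_one_mem_slitPlane hx
  have hx10 := slitPlane_ne_zero hx1
  have hr1 : 1 - x / (x + 1) ≠ 0 := by
    rw [one_sub_div hx10, add_sub_cancel_left]
    exact one_div_ne_zero hx10
  have hS1 := ((tendsto_sum_digammaRemainder hx).sub (tendsto_sum_digammaRemainder hx1)).sub
    ((tendsto_sum_digammaRemainder hr).const_mul (1 / (x + 1)))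
  have hconst := ((continuous_ofReal.tendsto _).comp tendsto_log_factorial_sub_harmonic)
  have hvalue := ((hconst.sub (tendsto_sum_digamma_sub_eulerMaclaurinPrimitive hr hr1)).add_const
    (x * log (x / (x + 1)) / 2)).const_mul (1 / (x + 1))
  push_cast [sub_zero, ofReal_log Real.two_pi_pos.le] at hvalue
  refine tendsto_nhds_unique hS1 (hvalue.congr' ?_)
  filter_upwards [eventually_gt_atTop 0] with N hN
  rw [sum_digammaRemainder_period_combination hx,
    eulerMaclaurinPrimitive_natCast_sub (slitPlane_ne_zero hr) hN, Function.comp_apply]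
  push_cast
  field_simp
  ring

lemma log_two_pi_div {p : ℂ} (hp : p ∈ slitPlane) : log (2 * π / p) = log (2 * π) - log p :=
  log_div_of_im_mul_im_nonneg (mod_cast ofReal_mem_slitPlane.2 Real.two_pi_pos) hp (by simp)

end PeriodRelation

theorem ramanujan_period_relation (x : ℂ) (hx : x ∈ Complex.slitPlane) :
    F1 x - F1 (x + 1) - (1 / (x + 1)) * F1 (x / (x + 1)) = 0 := by
  have hx1 : x + 1 ∈ slitPlane := mod_cast add_natCast_mem_slitPlane hx 1
  have hx10 := slitPlane_ne_zero hx1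
  have hS1 := S1_period_combination hx
  have hlog := log_div_add_one hx
  have hx1_inv : 1 / (x + 1) * (x + 1) = 1 := one_div_mul_cancel hx10
  rw [F1, F1, F1, log_two_pi_div hx, log_two_pi_div hx1,
    log_two_pi_div (div_add_one_mem_slitPlane hx)]
  linear_combination hS1 + hlog / 2 + log (x / (x + 1)) / 2 * hx1_inv
end
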